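/- arXiv:2505.19072 — 3 statements merged into one kernel-verified Lean document; each statement's English description precedes it below -/
import Mathlib

section
/- For any partition λ and any n ≥ 1, the filling T_max is a highest weight element of SVRPP^n(λ) (that is, e_i(T_max) = 0 for all i ∈ {1,...,n−1}) and wt(T_max) = λ̄^{(n)}. -/
open scoped Classical

/-- A partition, given as its weakly decreasing sequence of parts (0-indexed),
with finitely many nonzero parts. -/
def IsPartitionFun (f : ℕ → ℕ) : Prop :=
  (∀ i, f (i + 1) ≤ f i) ∧ ∃ N, ∀ i, N ≤ i → f i = 0

/-- Box `(i, j)` (row `i`, column `j`, both 0-indexed) lies in the skew shape `lam/mu`. -/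
def InShape (lam mu : ℕ → ℕ) (i j : ℕ) : Prop :=
  mu i ≤ j ∧ j < lam i

/-- `A ≤ B` for finite sets of naturals: every element of `A` is at most every
element of `B` (for nonempty sets this says `max A ≤ min B`). -/
def FinsetLE (A B : Finset ℕ) : Prop :=
  ∀ a ∈ A, ∀ b ∈ B, a ≤ b

/-- A set-valued reverse plane partition of skew shape `lam/mu`: every box of the
shape is filled with a nonempty finite set of positive integers, the sets weakly
increase along rows and down columns, and boxes outside the shape are empty. -/
def IsSVRPP (lam mu : ℕ → ℕ) (T : ℕ → ℕ → Finset ℕ) : Prop :=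
  (∀ i j, ¬ InShape lam mu i j → T i j = ∅) ∧
  (∀ i j, InShape lam mu i j → (T i j).Nonempty) ∧
  (∀ i j x, x ∈ T i j → 1 ≤ x) ∧
  (∀ i j, InShape lam mu i j → InShape lam mu i (j + 1) → FinsetLE (T i j) (T i (j + 1))) ∧
  (∀ i j, InShape lam mu i j → InShape lam mu (i + 1) j → FinsetLE (T i j) (T (i + 1) j))

/-- An SVRPP all of whose entries are subsets of `{1, …, n}`. -/
def IsSVRPPn (lam mu : ℕ → ℕ) (n : ℕ) (T : ℕ → ℕ → Finset ℕ) : Prop :=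
  IsSVRPP lam mu T ∧ ∀ i j, T i j ⊆ Finset.Icc 1 n

/-- `ircont T v` = number of columns of `T` containing a set that contains `v`. -/
noncomputable def ircont (T : ℕ → ℕ → Finset ℕ) (v : ℕ) : ℕ :=
  Set.ncard {j : ℕ | ∃ i, v ∈ T i j}

/-- `ceq lam mu T i` = number of boxes `(i,j)` of the shape with `(i+1,j)` also in the
shape and `max T(i,j) = min T(i+1,j)`. -/
noncomputable def ceq (lam mu : ℕ → ℕ) (T : ℕ → ℕ → Finset ℕ) (i : ℕ) : ℕ :=
  Set.ncard {j : ℕ | InShape lam mu i j ∧ InShape lam mu (i + 1) j ∧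
    ∃ m, m ∈ T i j ∧ (∀ x ∈ T i j, x ≤ m) ∧ m ∈ T (i + 1) j ∧ ∀ x ∈ T (i + 1) j, m ≤ x}

/-- `exv lam mu T i` = excess of row `i`: the sum over the boxes of row `i` of
(cardinality of the filling minus one). -/
def exv (lam mu : ℕ → ℕ) (T : ℕ → ℕ → Finset ℕ) (i : ℕ) : ℕ :=
  ∑ j ∈ Finset.Ico (mu i) (lam i), ((T i j).card - 1)

/-! ### Two-letter fillings (letters `a` and `a+1`) and descent resolution -/

/-- Column `j` of the filling `S` contains the letter `x` somewhere. -/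
def ColHas (S : ℕ → ℕ → Finset ℕ) (j x : ℕ) : Prop := ∃ r, x ∈ S r j

/-- Column `j` is `a`-pure: it contains the letter `a` but not the letter `a+1`. -/
def ColPureA (a : ℕ) (S : ℕ → ℕ → Finset ℕ) (j : ℕ) : Prop :=
  ColHas S j a ∧ ¬ ColHas S j (a + 1)

/-- Column `j` is `(a+1)`-pure: it contains the letter `a+1` but not the letter `a`. -/
def ColPureB (a : ℕ) (S : ℕ → ℕ → Finset ℕ) (j : ℕ) : Prop :=
  ColHas S j (a + 1) ∧ ¬ ColHas S j a

/-- Column `j` is mixed: it contains both letters `a` and `a+1`. -/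
def ColMixed (a : ℕ) (S : ℕ → ℕ → Finset ℕ) (j : ℕ) : Prop :=
  ColHas S j a ∧ ColHas S j (a + 1)

/-- `sep a S j`: the smallest row index `r` with `a+1 ∈ S r j` (the transition row of a
mixed column). -/
noncomputable def sep (a : ℕ) (S : ℕ → ℕ → Finset ℕ) (j : ℕ) : ℕ :=
  sInf {r : ℕ | a + 1 ∈ S r j}

/-- `botA a S j`: the largest row index `r` with `a ∈ S r j` (the bottom-most box of
column `j` containing the letter `a`). -/
noncomputable def botA (a : ℕ) (S : ℕ → ℕ → Finset ℕ) (j : ℕ) : ℕ :=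
  sSup {r : ℕ | a ∈ S r j}

/-- `k` is a descent of `S`: in some row, a box whose maximum is `a+1` lies immediately
to the left of a box whose minimum is `a`. -/
def Descent (a : ℕ) (S : ℕ → ℕ → Finset ℕ) (k : ℕ) : Prop :=
  ∃ r, a + 1 ∈ S r k ∧ a ∈ S r (k + 1)

/-- The flip map: each entry of every `a`-pure column is replaced by `{a+1}`, each entry
of every `(a+1)`-pure column is replaced by `{a}`, and mixed columns stay unchanged. -/
noncomputable def flipT (a : ℕ) (S : ℕ → ℕ → Finset ℕ) : ℕ → ℕ → Finset ℕ :=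
  fun r j =>
    if ColPureA a S j then (S r j).image (fun _ => a + 1)
    else if ColPureB a S j then (S r j).image (fun _ => a)
    else S r j

/-- The descent-resolution operation `res_k` at columns `k, k+1`, implementing the
(M1), (2M) and (21) moves (with `a, a+1` playing the roles of `1, 2`). -/
noncomputable def resFun (a : ℕ) (S : ℕ → ℕ → Finset ℕ) (k : ℕ) : ℕ → ℕ → Finset ℕ :=
  fun r j =>
    if ColMixed a S k ∧ ColPureA a S (k + 1) then
      -- (M1): the transition row is `sep a S k`, the transition entry is `S (sep a S k) k`.
      (if j = k then (S r j).image (fun _ => a)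
       else if j = k + 1 then
         (if (S r j).Nonempty then
            (if r < sep a S k then {a}
             else if r = sep a S k then S r k
             else {a + 1})
          else ∅)
       else S r j)
    else if ColPureB a S k ∧ ColMixed a S (k + 1) then
      -- (2M): the transition row is `botA a S (k+1)`, the transition entry is
      -- `S (botA a S (k+1)) (k+1)`.
      (if j = k then
         (if (S r j).Nonempty then
            (if r < botA a S (k + 1) then {a}
             else if r = botA a S (k + 1) then S r (k + 1)
             else {a + 1})
          else ∅)
       else if j = k + 1 then (S r j).image (fun _ => a + 1)
       else S r j)
    else if ColPureB a S k ∧ ColPureA a S (k + 1) then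
      -- (21): the two columns swap purities.
      (if j = k then (S r j).image (fun _ => a)
       else if j = k + 1 then (S r j).image (fun _ => a + 1)
       else S r j)
    else S r j

/-- One descent-resolution step: `ResStep a S S'` holds when `S' = res_k S` for some
descent `k` of `S`. -/
def ResStep (a : ℕ) (S S' : ℕ → ℕ → Finset ℕ) : Prop :=
  ∃ k, Descent a S k ∧ S' = resFun a S k

/-! ### Crystal operators on set-valued reverse plane partitions -/

/-- The restriction `T^{(i)}` of a filling to the letters `i` and `i+1`: each box keeps
its intersection with `{i, i+1}`. -/
def restrictTwo (i : ℕ) (T : ℕ → ℕ → Finset ℕ) : ℕ → ℕ → Finset ℕ :=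
  fun r j => (T r j).filter (fun x => x = i ∨ x = i + 1)

/-- The complement of `T^{(i)}` inside `T`: each box keeps its letters other than
`i` and `i+1`. -/
def eraseTwo (i : ℕ) (T : ℕ → ℕ → Finset ℕ) : ℕ → ℕ → Finset ℕ :=
  fun r j => (T r j).filter (fun x => ¬ (x = i ∨ x = i + 1))

/-- Recombine a filling `T` with a new `{i, i+1}`-part `S`. -/
def mergeTwo (i : ℕ) (T S : ℕ → ℕ → Finset ℕ) : ℕ → ℕ → Finset ℕ :=
  fun r j => eraseTwo i T r j ∪ S r j

/-- In column `A`, replace every letter `i+1` by `i`. -/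
def raiseCol (i A : ℕ) (S : ℕ → ℕ → Finset ℕ) : ℕ → ℕ → Finset ℕ :=
  fun r j => if j = A then (S r j).image (fun x => if x = i + 1 then i else x) else S r j

/-- In column `A`, replace every letter `i` by `i+1`. -/
def lowerCol (i A : ℕ) (S : ℕ → ℕ → Finset ℕ) : ℕ → ℕ → Finset ℕ :=
  fun r j => if j = A then (S r j).image (fun x => if x = i then i + 1 else x) else S r j

/-- Suffix statistic of the `i`-signature: the number of `(i+1)`-pure columns `≥ p` minus
the number of `i`-pure columns `≥ p` (of `T^{(i)}`). -/
noncomputable def fsuffix (i : ℕ) (T : ℕ → ℕ → Finset ℕ) (p : ℕ) : ℤ :=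
  (Set.ncard {j : ℕ | p ≤ j ∧ ColPureB i (restrictTwo i T) j} : ℤ) -
  (Set.ncard {j : ℕ | p ≤ j ∧ ColPureA i (restrictTwo i T) j} : ℤ)

/-- Prefix statistic of the `i`-signature: the number of `i`-pure columns `≤ p` minus the
number of `(i+1)`-pure columns `≤ p` (of `T^{(i)}`). -/
noncomputable def gprefix (i : ℕ) (T : ℕ → ℕ → Finset ℕ) (p : ℕ) : ℤ :=
  (Set.ncard {j : ℕ | j ≤ p ∧ ColPureA i (restrictTwo i T) j} : ℤ) -
  (Set.ncard {j : ℕ | j ≤ p ∧ ColPureB i (restrictTwo i T) j} : ℤ)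

/-- Column `A` carries the leftmost uncancelled `−` of the reduced `i`-signature of `T`:
it is `(i+1)`-pure and is the largest maximizer of the suffix statistic. -/
def LeftmostUnpairedMinus (i : ℕ) (T : ℕ → ℕ → Finset ℕ) (A : ℕ) : Prop :=
  ColPureB i (restrictTwo i T) A ∧
  (∀ p, fsuffix i T p ≤ fsuffix i T A) ∧
  (∀ p, A < p → fsuffix i T p < fsuffix i T A)

/-- Column `A` carries the rightmost uncancelled `+` of the reduced `i`-signature of `T`:
it is `i`-pure and is the smallest maximizer of the prefix statistic. -/
def RightmostUnpairedPlus (i : ℕ) (T : ℕ → ℕ → Finset ℕ) (A : ℕ) : Prop :=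
  ColPureA i (restrictTwo i T) A ∧
  (∀ p, gprefix i T p ≤ gprefix i T A) ∧
  (∀ p, p < A → gprefix i T p < gprefix i T A)

/-- `ERel i T T'` : `T'` is obtained from `T` by the raising operator `e_i`: change all
`(i+1)`'s to `i`'s in the column of the leftmost uncancelled `−`, run the
descent-resolution algorithm on the `{i, i+1}`-part until no descent remains, and merge
the result back into `T`. -/
def ERel (i : ℕ) (T T' : ℕ → ℕ → Finset ℕ) : Prop :=
  ∃ A S', LeftmostUnpairedMinus i T A ∧
    Relation.ReflTransGen (ResStep i) (raiseCol i A (restrictTwo i T)) S' ∧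
    (∀ k, ¬ Descent i S' k) ∧
    T' = mergeTwo i T S'

/-- `FRel i T T'` : `T'` is obtained from `T` by the lowering operator `f_i`. -/
def FRel (i : ℕ) (T T' : ℕ → ℕ → Finset ℕ) : Prop :=
  ∃ A S', RightmostUnpairedPlus i T A ∧
    Relation.ReflTransGen (ResStep i) (lowerCol i A (restrictTwo i T)) S' ∧
    (∀ k, ¬ Descent i S' k) ∧
    T' = mergeTwo i T S'

/-- The raising crystal operator `e_i` (with value `none` playing the role of `0`). -/
noncomputable def eOp (i : ℕ) (T : ℕ → ℕ → Finset ℕ) : Option (ℕ → ℕ → Finset ℕ) :=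
  if h : ∃ T', ERel i T T' then some h.choose else none

/-- The lowering crystal operator `f_i` (with value `none` playing the role of `0`). -/
noncomputable def fOp (i : ℕ) (T : ℕ → ℕ → Finset ℕ) : Option (ℕ → ℕ → Finset ℕ) :=
  if h : ∃ T', FRel i T T' then some h.choose else none

/-! ### The partitions `λ^♭` and `λ̄^{(n)}` and the tableau `T_max` -/

/-- The strict partition `λ^♭` (1-indexed part `v` is `flatPart lam (v-1)`):
`λ^♭_1 = λ_1` and `λ^♭_i = max{0, min{λ^♭_{i−1} − 1, λ_i}}` for `i ≥ 2` (truncated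
subtraction realizes the `max{0, ·}`). -/
def flatPart (lam : ℕ → ℕ) : ℕ → ℕ
  | 0 => lam 0
  | i + 1 => min (flatPart lam i - 1) (lam (i + 1))

/-- `k` = number of positive parts of `λ^♭`. -/
noncomputable def kFlat (lam : ℕ → ℕ) : ℕ :=
  Set.ncard {i : ℕ | 0 < flatPart lam i}

/-- The partition `λ̄^{(n)}`, as a function of the 1-indexed part `v`:
`λ̄^{(n)}_v = λ^♭_v + v − 1` for `1 ≤ v ≤ min(n, k)`, `λ̄^{(n)}_v = k` for `k < v ≤ n`,
and `0` for `v > n`. -/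
noncomputable def barLam (lam : ℕ → ℕ) (n : ℕ) (v : ℕ) : ℕ :=
  if 1 ≤ v ∧ v ≤ n then
    (if v ≤ kFlat lam then flatPart lam (v - 1) + (v - 1) else kFlat lam)
  else 0

/-- The tableau `T_max ∈ SVRPP^n(lam)`: in 1-indexed coordinates `(i, j)`,
`T_max(i,j) = {i}` if `i ≤ n` and `j < λ^♭_i`; `T_max(i,j) = {i, …, n}` if `i ≤ n` and
`j = λ^♭_i`; and `T_max(i,j) = {n}` otherwise (internally rows `r` and columns `j` are
0-indexed, so `(i, j) = (r + 1, j + 1)`). -/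
noncomputable def Tmax (lam : ℕ → ℕ) (n : ℕ) : ℕ → ℕ → Finset ℕ :=
  fun r j =>
    if j < lam r then
      (if r + 1 ≤ n ∧ j + 1 < flatPart lam r then {r + 1}
       else if r + 1 ≤ n ∧ j + 1 = flatPart lam r then Finset.Icc (r + 1) n
       else {n})
    else ∅

/-!
With rows counted from `0`, a column of `T_max` contains the letter `m + 1 ≤ n` exactly when it
meets row `m` of `λ^♭` or contains the last box of a row `r < m` of `λ^♭`: every box of `λ / λ^♭`
lies below the last box of an earlier row of `λ^♭`. Hence every column containing `i + 1` contains
`i`, so no `i`-signature has a `-`. Since `λ^♭` is strict, its rows end in distinct columns, and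
counting these columns gives the weight.
-/

section FlatPart

variable (lam : ℕ → ℕ)

theorem flatPart_le (r : ℕ) : flatPart lam r ≤ lam r := by
  cases r with
  | zero => exact le_rfl
  | succ r => exact min_le_right _ _

theorem flatPart_add_le (r s : ℕ) : flatPart lam (r + s) ≤ flatPart lam r - s := by
  induction s with
  | zero => exact le_rfl
  | succ s ih =>
    calc flatPart lam (r + s + 1) ≤ flatPart lam (r + s) - 1 := min_le_left _ _
      _ ≤ flatPart lam r - s - 1 := Nat.sub_le_sub_right ih 1

theorem flatPart_antitone : Antitone (flatPart lam) :=
  antitone_nat_of_succ_le fun r ↦ (flatPart_add_le lam r 1).trans (Nat.sub_le _ _)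

theorem flatPart_strictAntiOn : StrictAntiOn (flatPart lam) {r | 0 < flatPart lam r} := by
  intro r (hr : 0 < flatPart lam r) s _ hrs
  have hsucc : flatPart lam s ≤ flatPart lam (r + 1) := flatPart_antitone lam hrs
  have hdrop : flatPart lam (r + 1) ≤ flatPart lam r - 1 := flatPart_add_le lam r 1
  omega

theorem setOf_flatPart_pos : {r | 0 < flatPart lam r} = Set.Iio (kFlat lam) := by
  have hlower : IsLowerSet {r | 0 < flatPart lam r} :=
    fun _ _ hsr hr ↦ lt_of_lt_of_le hr (flatPart_antitone lam hsr)
  have hzero : flatPart lam (lam 0) = 0 := by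
    simpa [flatPart] using flatPart_add_le lam 0 (lam 0)
  obtain huniv | ⟨k, hk⟩ := hlower.eq_univ_or_Iio
  · have : lam 0 ∈ {r | 0 < flatPart lam r} := huniv ▸ Set.mem_univ _
    exact absurd this (by simp [hzero])
  · rw [kFlat, hk, Set.ncard_Iio_nat]

theorem flatPart_pos_iff {r : ℕ} : 0 < flatPart lam r ↔ r < kFlat lam :=
  Set.ext_iff.1 (setOf_flatPart_pos lam) r

/-- The 0-indexed columns in which the first `m` rows of `λ^♭` end, that is, the columns of the
boxes of `T_max` in these rows that are filled with an interval `{r, …, n}`. -/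
def cornerCols (m : ℕ) : Set ℕ :=
  {j | ∃ r < m, j + 1 = flatPart lam r}

theorem cornerCols_eq_image (m : ℕ) :
    cornerCols lam m = (fun r ↦ flatPart lam r - 1) '' Set.Iio (min m (kFlat lam)) := by
  ext j
  simp only [cornerCols, Set.mem_ofPred_eq, Set.mem_image, Set.mem_Iio, lt_min_iff, and_assoc,
    ← flatPart_pos_iff]
  exact exists_congr fun r ↦ and_congr_right fun _ ↦ by omega

theorem ncard_cornerCols (m : ℕ) : (cornerCols lam m).ncard = min m (kFlat lam) := by
  have hinj : Set.InjOn (fun r ↦ flatPart lam r - 1) (Set.Iio (min m (kFlat lam))) := by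
    intro r hr s hs hrs
    have hr' := (flatPart_pos_iff lam).2 (lt_min_iff.1 hr).2
    have hs' := (flatPart_pos_iff lam).2 (lt_min_iff.1 hs).2
    exact (flatPart_strictAntiOn lam).injOn hr' hs' (Nat.pred_inj hr' hs' hrs)
  rw [cornerCols_eq_image, hinj.ncard_image, Set.ncard_Iio_nat]

theorem disjoint_Iio_cornerCols (m : ℕ) :
    Disjoint (Set.Iio (flatPart lam m)) (cornerCols lam m) := by
  refine Set.disjoint_left.2 ?_
  rintro j (hj : j < flatPart lam m) ⟨r, hrm, hjr⟩
  have hposr : 0 < flatPart lam r := hjr ▸ j.succ_pos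
  have hposm : 0 < flatPart lam m := Nat.zero_lt_of_lt hj
  have hlt : flatPart lam m < flatPart lam r := flatPart_strictAntiOn lam hposr hposm hrm
  omega

theorem ncard_Iio_union_cornerCols (m : ℕ) :
    (Set.Iio (flatPart lam m) ∪ cornerCols lam m).ncard = flatPart lam m + min m (kFlat lam) := by
  have hfin : (cornerCols lam m).Finite :=
    cornerCols_eq_image lam m ▸ (Set.finite_Iio _).image _
  rw [Set.ncard_union_eq (disjoint_Iio_cornerCols lam m) (Set.finite_Iio _) hfin,
    Set.ncard_Iio_nat, ncard_cornerCols]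

theorem Iio_union_cornerCols_antitone :
    Antitone fun m ↦ Set.Iio (flatPart lam m) ∪ cornerCols lam m := by
  refine antitone_nat_of_succ_le fun m ↦ ?_
  rintro j (hj | ⟨r, hr, hjr⟩)
  · exact Or.inl (lt_of_lt_of_le hj (flatPart_antitone lam m.le_succ))
  · obtain hrm | rfl := Nat.lt_succ_iff_lt_or_eq.1 hr
    · exact Or.inr ⟨r, hrm, hjr⟩
    · exact Or.inl (hjr ▸ j.lt_succ_self)

variable {lam} in
theorem mem_cornerCols_of_flatPart_le (hlam : Antitone lam) {r j : ℕ}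
    (hflat : flatPart lam r ≤ j) (hj : j < lam r) : j ∈ cornerCols lam r := by
  induction r with
  | zero => exact absurd hj hflat.not_gt
  | succ r ih =>
    have hjr : j < lam r := lt_of_lt_of_le hj (hlam r.le_succ)
    -- As `j < λ_{r+1}`, the minimum defining `λ^♭_{r+1}` is attained at `λ^♭_r - 1`.
    have hprev : flatPart lam r ≤ j + 1 := by
      simp only [flatPart] at hflat
      omega
    obtain heq | hlt := hprev.eq_or_lt
    · exact ⟨r, r.lt_succ_self, heq.symm⟩
    · obtain ⟨s, hs, hjs⟩ := ih (Nat.le_of_lt_succ hlt) hjr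
      exact ⟨s, hs.trans r.lt_succ_self, hjs⟩

theorem barLam_succ {n m : ℕ} (hm : m < n) :
    barLam lam n (m + 1) = flatPart lam m + min m (kFlat lam) := by
  have hpos := flatPart_pos_iff lam (r := m)
  rw [barLam, if_pos ⟨m.succ_pos, hm⟩, Nat.add_sub_cancel]
  split_ifs <;> omega

end FlatPart

section Signature

variable {i : ℕ} {T : ℕ → ℕ → Finset ℕ}

theorem colHas_restrictTwo {j x : ℕ} :
    ColHas (restrictTwo i T) j x ↔ ColHas T j x ∧ (x = i ∨ x = i + 1) := by
  simp only [ColHas, restrictTwo, Finset.mem_filter, exists_and_right]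

theorem eOp_eq_none_of_colHas (h : ∀ j, ColHas T j (i + 1) → ColHas T j i) :
    eOp i T = none := by
  refine dif_neg ?_
  rintro ⟨_, A, _, ⟨⟨hsucc, hnot⟩, _⟩, _⟩
  exact hnot (colHas_restrictTwo.2 ⟨h A (colHas_restrictTwo.1 hsucc).1, Or.inl rfl⟩)

end Signature

section Tmax

variable {lam : ℕ → ℕ} {n : ℕ}

theorem mem_Tmax {r j x : ℕ} :
    x ∈ Tmax lam n r j ↔ j < lam r ∧
      (r < n ∧ j + 1 < flatPart lam r ∧ x = r + 1 ∨
        r < n ∧ j + 1 = flatPart lam r ∧ r + 1 ≤ x ∧ x ≤ n ∨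
        (n ≤ r ∨ flatPart lam r ≤ j) ∧ x = n) := by
  unfold Tmax
  split_ifs <;>
    simp only [Finset.mem_singleton, Finset.mem_Icc, Finset.notMem_empty, false_iff] <;>
    omega

theorem Tmax_subset_Icc (hn : 1 ≤ n) (r j : ℕ) : Tmax lam n r j ⊆ Finset.Icc 1 n := by
  intro x hx
  rw [mem_Tmax] at hx
  rw [Finset.mem_Icc]
  omega

theorem Tmax_nonempty {r j : ℕ} (hj : j < lam r) : (Tmax lam n r j).Nonempty := by
  by_cases hrow : r < n ∧ j + 1 < flatPart lam r
  · exact ⟨r + 1, mem_Tmax.2 (by omega)⟩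
  · exact ⟨n, mem_Tmax.2 (by omega)⟩

theorem finsetLE_Tmax_right (r j : ℕ) :
    FinsetLE (Tmax lam n r j) (Tmax lam n r (j + 1)) := by
  intro a ha b hb
  rw [mem_Tmax] at ha hb
  omega

theorem finsetLE_Tmax_down (r j : ℕ) :
    FinsetLE (Tmax lam n r j) (Tmax lam n (r + 1) j) := by
  intro a ha b hb
  have hstrict : flatPart lam (r + 1) ≤ flatPart lam r - 1 := flatPart_add_le lam r 1
  rw [mem_Tmax] at ha hb
  omega

theorem isSVRPPn_Tmax (hn : 1 ≤ n) : IsSVRPPn lam (fun _ ↦ 0) n (Tmax lam n) :=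
  ⟨⟨fun _ j hout ↦ if_neg fun hj ↦ hout ⟨j.zero_le, hj⟩,
    fun _ _ hin ↦ Tmax_nonempty hin.2,
    fun r j _ hx ↦ (Finset.mem_Icc.1 (Tmax_subset_Icc hn r j hx)).1,
    fun r j _ _ ↦ finsetLE_Tmax_right r j,
    fun r j _ _ ↦ finsetLE_Tmax_down r j⟩,
    Tmax_subset_Icc hn⟩

theorem setOf_colHas_Tmax (hlam : Antitone lam) {m : ℕ} (hm : m < n) :
    {j | ColHas (Tmax lam n) j (m + 1)} = Set.Iio (flatPart lam m) ∪ cornerCols lam m := by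
  ext j
  constructor
  · rintro ⟨r, hr⟩
    have hjr : j < lam r := (mem_Tmax.1 hr).1
    refine or_iff_not_imp_left.2 fun hjm ↦ ?_
    obtain hmr | hrm := le_or_gt m r
    · exact mem_cornerCols_of_flatPart_le hlam (not_lt.1 hjm) (lt_of_lt_of_le hjr (hlam hmr))
    · have hend : j + 1 = flatPart lam r ∨ flatPart lam r ≤ j := by
        rw [mem_Tmax] at hr
        omega
      obtain hend | hout := hend
      · exact ⟨r, hrm, hend⟩
      · obtain ⟨s, hs, hjs⟩ := mem_cornerCols_of_flatPart_le hlam hout hjr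
        exact ⟨s, hs.trans hrm, hjs⟩
  · rintro (hj | ⟨r, hrm, hjr⟩)
    · rw [Set.mem_Iio] at hj
      have := flatPart_le lam m
      exact ⟨m, mem_Tmax.2 (by omega)⟩
    · have := flatPart_le lam r
      exact ⟨r, mem_Tmax.2 (by omega)⟩

theorem eOp_Tmax_eq_none (hlam : Antitone lam) {i : ℕ} (hi : 1 ≤ i) (hin : i < n) :
    eOp i (Tmax lam n) = none := by
  obtain ⟨m, rfl⟩ := Nat.exists_eq_add_of_le' hi
  have hsub : {j | ColHas (Tmax lam n) j (m + 1 + 1)} ⊆ {j | ColHas (Tmax lam n) j (m + 1)} := by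
    rw [setOf_colHas_Tmax hlam hin, setOf_colHas_Tmax hlam (m.lt_succ_self.trans hin)]
    exact Iio_union_cornerCols_antitone lam m.le_succ
  exact eOp_eq_none_of_colHas hsub

theorem ircont_Tmax_eq_barLam (hlam : Antitone lam) (hn : 1 ≤ n) (v : ℕ) :
    ircont (Tmax lam n) v = barLam lam n v := by
  by_cases hv : 1 ≤ v ∧ v ≤ n
  · obtain ⟨m, rfl⟩ := Nat.exists_eq_add_of_le' hv.1
    calc ircont (Tmax lam n) (m + 1)
        = (Set.Iio (flatPart lam m) ∪ cornerCols lam m).ncard :=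
          congrArg Set.ncard (setOf_colHas_Tmax hlam hv.2)
      _ = flatPart lam m + min m (kFlat lam) := ncard_Iio_union_cornerCols lam m
      _ = barLam lam n (m + 1) := (barLam_succ lam hv.2).symm
  · have hempty : {j | ∃ r, v ∈ Tmax lam n r j} = ∅ :=
      Set.eq_empty_iff_forall_notMem.2 fun j ⟨r, hr⟩ ↦
        hv (Finset.mem_Icc.1 (Tmax_subset_Icc hn r j hr))
    rw [ircont, hempty, Set.ncard_empty, barLam, if_neg hv]

end Tmax

theorem Tmax_highest_weight_general (lam : ℕ → ℕ) (hlam : Antitone lam) (n : ℕ) (hn : 1 ≤ n) :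
    IsSVRPPn lam (fun _ ↦ 0) n (Tmax lam n) ∧
    (∀ i, 1 ≤ i → i < n → eOp i (Tmax lam n) = none) ∧
    (∀ v, ircont (Tmax lam n) v = barLam lam n v) :=
  ⟨isSVRPPn_Tmax hn, fun _ ↦ eOp_Tmax_eq_none hlam, ircont_Tmax_eq_barLam hlam hn⟩

/-- For any partition `lam` and any `n ≥ 1`, the filling `T_max` is a
highest weight element of `SVRPP^n(lam)` (i.e. it lies in `SVRPP^n(lam)` and
`e_i(T_max) = 0` for all `i ∈ {1,…,n−1}`) and `wt(T_max) = λ̄^{(n)}`. -/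
theorem Tmax_highest_weight (lam : ℕ → ℕ) (hlam : IsPartitionFun lam)
    (n : ℕ) (hn : 1 ≤ n) :
    IsSVRPPn lam (fun _ => 0) n (Tmax lam n) ∧
    (∀ i, 1 ≤ i → i < n → eOp i (Tmax lam n) = none) ∧
    (∀ v, ircont (Tmax lam n) v = barLam lam n v) :=
  Tmax_highest_weight_general lam (antitone_nat_of_succ_le hlam.1) n hn
end

section
/- For any partition λ and any n ≥ 1, if T ∈ SVRPP^n(λ) is a highest weight element with wt(T) = ρ, then ρ is a partition satisfying (λ_1) ⊆ ρ ⊆ λ̄^{(n)}, that is, ρ_1 = λ_1 and ρ_i ≤ λ̄^{(n)}_i for all i. -/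
open scoped Classical

/-!
Restricted to the letters `i, i + 1`, a filling is *benign*: the rows where the letters of a mixed
column meet strictly move up from each mixed column to the next. Making a column `i`-pure
keeps it benign, and so does resolving a descent, which also makes the sequence of column types
(`i`-pure < mixed < `(i + 1)`-pure) lexicographically smaller. So descent resolution terminates,
and `e_i T = 0` can only mean that no `-` is left uncancelled: for every `p`, at most as many
columns `≥ p` contain `i + 1` as contain `i`.

Let `r < v`, both rows and columns being counted from `0`. At most `r` columns contain `v` in one of
the rows `0, …, r - 1`: if `j` is the leftmost column with `v` in row `r - 1`, all the others lie
to its right, where at most as many columns contain `v` as contain `v - 1`, and all letters `v - 1`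
there lie above row `r - 1`, so one can induct on `r`. The columns containing `v` further down
number at most `lam r`, whence `ircont T v ≤ lam r + r`, and some `s ≤ r` has
`lam s + s ≤ flatPart lam r + r`. Taking `r = min (v - 1) (kFlat lam)`, this is the claimed bound.
-/

variable {lam mu : ℕ → ℕ} {T : ℕ → ℕ → Finset ℕ}

/-! ### Set-valued reverse plane partitions -/

theorem InShape.of_le_of_le (hlam : Antitone lam) (hmu : Antitone mu) {r j s k r' j' : ℕ}
    (h : InShape lam mu r j) (h' : InShape lam mu r' j') (hrs : r ≤ s) (hsr' : s ≤ r')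
    (hjk : j ≤ k) (hkj' : k ≤ j') : InShape lam mu s k :=
  ⟨(hmu hrs).trans (h.1.trans hjk), hkj'.trans_lt (h'.2.trans_le (hlam hsr'))⟩

namespace IsSVRPP

theorem inShape_of_mem (hT : IsSVRPP lam mu T) {r j x : ℕ} (hx : x ∈ T r j) :
    InShape lam mu r j := by
  by_contra h
  simp [hT.1 r j h] at hx

theorem exists_mem (hT : IsSVRPP lam mu T) {r j : ℕ} (h : InShape lam mu r j) :
    ∃ x, x ∈ T r j :=
  hT.2.1 r j h

theorem one_le_of_mem (hT : IsSVRPP lam mu T) {r j x : ℕ} (hx : x ∈ T r j) : 1 ≤ x :=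
  hT.2.2.1 r j x hx

theorem le_of_mem_row (hT : IsSVRPP lam mu T) {r j j' x y : ℕ} (hjj' : j < j')
    (hx : x ∈ T r j) (hy : y ∈ T r j') : x ≤ y := by
  have hxs := hT.inShape_of_mem hx
  have hrow {k : ℕ} := hT.2.2.2.1 r k
  induction j', hjj' using Nat.le_induction generalizing y with
  | base => exact hrow hxs (hT.inShape_of_mem hy) x hx y hy
  | succ k hjk ih =>
    have hys := hT.inShape_of_mem hy
    have hks : InShape lam mu r k := ⟨hxs.1.trans (Nat.le_of_succ_le hjk), Nat.lt_of_succ_lt hys.2⟩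
    obtain ⟨z, hz⟩ := hT.exists_mem hks
    exact (ih hz).trans (hrow hks hys z hz y hy)

theorem le_of_mem_column (hlam : Antitone lam) (hmu : Antitone mu) (hT : IsSVRPP lam mu T)
    {r r' j x y : ℕ} (hrr' : r < r') (hx : x ∈ T r j) (hy : y ∈ T r' j) : x ≤ y := by
  have hxs := hT.inShape_of_mem hx
  have hcol {s : ℕ} := hT.2.2.2.2 s j
  induction r', hrr' using Nat.le_induction generalizing y with
  | base => exact hcol hxs (hT.inShape_of_mem hy) x hx y hy
  | succ s hrs ih =>
    have hys := hT.inShape_of_mem hy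
    have hss : InShape lam mu s j :=
      hxs.of_le_of_le hlam hmu hys (Nat.le_of_succ_le hrs) s.le_succ le_rfl le_rfl
    obtain ⟨z, hz⟩ := hT.exists_mem hss
    exact (ih hz).trans (hcol hss hys z hz y hy)

theorem le_of_mem (hlam : Antitone lam) (hmu : Antitone mu) (hT : IsSVRPP lam mu T)
    {r j r' j' x y : ℕ} (h : r < r' ∧ j ≤ j' ∨ r ≤ r' ∧ j < j')
    (hx : x ∈ T r j) (hy : y ∈ T r' j') : x ≤ y := by
  have hr : r ≤ r' := by omega
  have hj : j ≤ j' := by omega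
  obtain ⟨z, hz⟩ := hT.exists_mem <|
    (hT.inShape_of_mem hx).of_le_of_le hlam hmu (hT.inShape_of_mem hy) le_rfl hr hj le_rfl
  rcases hj.eq_or_lt with rfl | hj
  · exact hT.le_of_mem_column hlam hmu (by omega) hx hy
  · rcases hr.eq_or_lt with rfl | hr
    · exact hT.le_of_mem_row hj hx hy
    · exact (hT.le_of_mem_row hj hx hz).trans (hT.le_of_mem_column hlam hmu hr hz hy)

theorem lt_of_colHas (hlam : Antitone lam) (hT : IsSVRPP lam mu T) {j v : ℕ}
    (h : ColHas T j v) : j < lam 0 := by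
  obtain ⟨r, hr⟩ := h
  exact (hT.inShape_of_mem hr).2.trans_le (hlam r.zero_le)

theorem finite_colHas (hlam : Antitone lam) (hT : IsSVRPP lam mu T) (v : ℕ) :
    {j | ColHas T j v}.Finite :=
  (Set.finite_Iio (lam 0)).subset fun _ hj => hT.lt_of_colHas hlam hj

end IsSVRPP

/-! ### Benign two-letter fillings -/

section Benign

variable {a k : ℕ} {S S' : ℕ → ℕ → Finset ℕ}

/-- The set of boxes `(row, column)` with a nonempty entry. -/
def fillingSupport (S : ℕ → ℕ → Finset ℕ) : Set (ℕ × ℕ) :=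
  {p | (S p.1 p.2).Nonempty}

/-- A benign filling with the letters `a, a + 1`: it lives on a convex set of boxes, its columns
weakly increase, and for any two mixed columns every `a` of the right one lies strictly above every
`a + 1` of the left one. The rows need not increase. -/
structure IsBenign (a : ℕ) (S : ℕ → ℕ → Finset ℕ) : Prop where
  ordConnected : (fillingSupport S).OrdConnected
  letter : ∀ {r j x}, x ∈ S r j → x = a ∨ x = a + 1
  column_sorted : ∀ {r r' j}, a + 1 ∈ S r j → a ∈ S r' j → r' ≤ r
  mixed_lt : ∀ {j j' r r'}, j < j' → ColMixed a S j → ColMixed a S j' →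
    a + 1 ∈ S r j → a ∈ S r' j' → r' < r

/-- Column `j` of `S'` is an admissible replacement for column `j` of `S`, modelled on column `m`
of `S`: it fills the same boxes and weakly increases, and if it is mixed then its lowest `a` is no
lower, and its highest `a + 1` no higher, than in column `m` of `S`. -/
structure ReplacesColumn (a : ℕ) (S S' : ℕ → ℕ → Finset ℕ) (m j : ℕ) : Prop where
  nonempty_iff : ∀ r, (S' r j).Nonempty ↔ (S r j).Nonempty
  letter : ∀ {r x}, x ∈ S' r j → x = a ∨ x = a + 1
  column_sorted : ∀ {r r'}, a + 1 ∈ S' r j → a ∈ S' r' j → r' ≤ r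
  exists_ge : ∀ {r}, ColMixed a S' j → a ∈ S' r j → ∃ r' ≥ r, a ∈ S r' m
  exists_le : ∀ {r}, ColMixed a S' j → a + 1 ∈ S' r j → ∃ r' ≤ r, a + 1 ∈ S r' m

/-- Row `x` separates the letters `a` of column `m` from its letters `a + 1`; row `x` itself may
contain either or both. -/
structure IsTransitionRow (a : ℕ) (S : ℕ → ℕ → Finset ℕ) (m x : ℕ) : Prop where
  nonempty : (S x m).Nonempty
  le_of_mem : ∀ {r}, a + 1 ∈ S r m → x ≤ r
  ge_of_mem : ∀ {r}, a ∈ S r m → r ≤ x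

theorem ReplacesColumn.colMixed {m j : ℕ} (h : ReplacesColumn a S S' m j)
    (hj : ColMixed a S' j) : ColMixed a S m := by
  obtain ⟨⟨r, hr⟩, s, hs⟩ := id hj
  obtain ⟨r', -, hr'⟩ := h.exists_ge hj hr
  obtain ⟨s', -, hs'⟩ := h.exists_le hj hs
  exact ⟨⟨r', hr'⟩, s', hs'⟩

theorem not_colMixed_of_mem_iff {b j : ℕ} (h : ∀ r y, y ∈ S' r j ↔ (S r j).Nonempty ∧ y = b) :
    ¬ ColMixed a S' j := by
  rintro ⟨⟨r, hr⟩, s, hs⟩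
  have h₁ := ((h r _).1 hr).2
  have h₂ := ((h s _).1 hs).2
  omega

theorem replacesColumn_of_mem_iff_eq {b m j : ℕ} (hb : b = a ∨ b = a + 1)
    (h : ∀ r y, y ∈ S' r j ↔ (S r j).Nonempty ∧ y = b) : ReplacesColumn a S S' m j where
  nonempty_iff r := by simp only [Finset.Nonempty, h, exists_and_left, exists_eq, and_true]
  letter hx := ((h _ _).1 hx).2 ▸ hb
  column_sorted hr hr' := absurd ⟨⟨_, hr'⟩, _, hr⟩ (not_colMixed_of_mem_iff h)
  exists_ge hj := absurd hj (not_colMixed_of_mem_iff h)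
  exists_le hj := absurd hj (not_colMixed_of_mem_iff h)

namespace IsBenign

theorem replacesColumn_of_eq (hS : IsBenign a S) {j : ℕ} (h : ∀ r, S' r j = S r j) :
    ReplacesColumn a S S' j j where
  nonempty_iff r := by rw [h]
  letter hx := hS.letter (h _ ▸ hx)
  column_sorted hr hr' := hS.column_sorted (h _ ▸ hr) (h _ ▸ hr')
  exists_ge _ hr := ⟨_, le_rfl, h _ ▸ hr⟩
  exists_le _ hr := ⟨_, le_rfl, h _ ▸ hr⟩

theorem mem_or_mem_of_le_of_le (hS : IsBenign a S) {t r s j : ℕ} (ht : a ∈ S t j)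
    (hs : a + 1 ∈ S s j) (htr : t ≤ r) (hrs : r ≤ s) : a ∈ S r j ∨ a + 1 ∈ S r j := by
  obtain ⟨y, hy⟩ : (r, j) ∈ fillingSupport S :=
    hS.ordConnected.out (x := (t, j)) (y := (s, j)) ⟨a, ht⟩ ⟨a + 1, hs⟩
      ⟨⟨htr, le_rfl⟩, hrs, le_rfl⟩
  rcases hS.letter hy with rfl | rfl
  exacts [.inl hy, .inr hy]

theorem replacesColumn_of_split (hS : IsBenign a S) {m j x : ℕ} (hm : ColMixed a S m)
    (hx : IsTransitionRow a S m x)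
    (h : ∀ r y, y ∈ S' r j ↔ (S r j).Nonempty ∧
      (r < x ∧ y = a ∨ r = x ∧ y ∈ S x m ∨ x < r ∧ y = a + 1)) :
    ReplacesColumn a S S' m j := by
  obtain ⟨⟨t, ht⟩, s, hs⟩ := hm
  refine ⟨fun r => ?_, fun {r y} hy => ?_, fun {r r'} hr hr' => ?_, fun {r} _ hr => ?_,
    fun {r} _ hr => ?_⟩
  · refine ⟨fun ⟨y, hy⟩ => ((h r y).1 hy).1, fun hr => ?_⟩
    rcases lt_trichotomy r x with hrx | rfl | hrx
    · exact ⟨a, (h r a).2 ⟨hr, .inl ⟨hrx, rfl⟩⟩⟩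
    · exact hx.nonempty.imp fun y hy => (h r y).2 ⟨hr, .inr (.inl ⟨rfl, hy⟩)⟩
    · exact ⟨a + 1, (h r (a + 1)).2 ⟨hr, .inr (.inr ⟨hrx, rfl⟩)⟩⟩
  · obtain ⟨-, ⟨-, hy⟩ | ⟨-, hy⟩ | ⟨-, hy⟩⟩ := (h r y).1 hy
    exacts [.inl hy, hS.letter hy, .inr hy]
  · have hxr : x ≤ r := by have := ((h _ _).1 hr).2; omega
    have hr'x : r' ≤ x := by have := ((h _ _).1 hr').2; omega
    exact hr'x.trans hxr
  · obtain ⟨-, ⟨hrx, -⟩ | ⟨rfl, hr⟩ | ⟨-, hr⟩⟩ := (h r a).1 hr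
    · by_cases hrt : r ≤ t
      · exact ⟨t, hrt, ht⟩
      · have hrs : r ≤ s := hrx.le.trans (hx.le_of_mem hs)
        have hr := hS.mem_or_mem_of_le_of_le ht hs (by omega) hrs
        exact ⟨r, le_rfl, hr.resolve_right fun hr' => hrx.not_ge (hx.le_of_mem hr')⟩
    · exact ⟨r, le_rfl, hr⟩
    · omega
  · obtain ⟨-, ⟨-, hr⟩ | ⟨rfl, hr⟩ | ⟨hxr, -⟩⟩ := (h r (a + 1)).1 hr
    · omega
    · exact ⟨r, le_rfl, hr⟩
    · by_cases hsr : s ≤ r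
      · exact ⟨s, hsr, hs⟩
      · have htr : t ≤ r := (hx.ge_of_mem ht).trans hxr.le
        have hr := hS.mem_or_mem_of_le_of_le ht hs htr (by omega)
        exact ⟨r, le_rfl, hr.resolve_left fun hr' => hxr.not_ge (hx.ge_of_mem hr')⟩

theorem isTransitionRow_sep (hS : IsBenign a S) {j : ℕ} (hj : ColHas S j (a + 1)) :
    IsTransitionRow a S j (sep a S j) := by
  have hsep : a + 1 ∈ S (sep a S j) j := Nat.sInf_mem (s := {r | a + 1 ∈ S r j}) hj
  exact ⟨⟨_, hsep⟩, fun hr => Nat.sInf_le hr, fun hr => hS.column_sorted hsep hr⟩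

theorem botA_mem (hS : IsBenign a S) {j : ℕ} (hj : ColMixed a S j) : a ∈ S (botA a S j) j := by
  obtain ⟨s, hs⟩ := hj.2
  exact Nat.sSup_mem (s := {r | a ∈ S r j}) hj.1 ⟨s, fun r hr => hS.column_sorted hs hr⟩

theorem isTransitionRow_botA (hS : IsBenign a S) {j : ℕ} (hj : ColMixed a S j) :
    IsTransitionRow a S j (botA a S j) := by
  obtain ⟨s, hs⟩ := hj.2
  have hbot := hS.botA_mem hj
  exact ⟨⟨_, hbot⟩, fun hr => hS.column_sorted hr hbot,
    fun hr => le_csSup (s := {r | a ∈ S r j}) ⟨s, fun r hr => hS.column_sorted hs hr⟩ hr⟩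

theorem of_replacesColumn (hS : IsBenign a S) (σ : ℕ → ℕ)
    (h : ∀ j, ReplacesColumn a S S' (σ j) j)
    (hσ : ∀ j j', j < j' → ColMixed a S' j → ColMixed a S' j' → σ j < σ j') :
    IsBenign a S' where
  ordConnected := by
    have hsupp : fillingSupport S' = fillingSupport S := Set.ext fun p => (h p.2).nonempty_iff p.1
    exact hsupp ▸ hS.ordConnected
  letter := (h _).letter
  column_sorted := (h _).column_sorted
  mixed_lt {j j' r r'} hjj' hj hj' hr hr' := by
    obtain ⟨q, hqr, hq⟩ := (h j).exists_le hj hr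
    obtain ⟨q', hrq', hq'⟩ := (h j').exists_ge hj' hr'
    have hlt : q' < q :=
      hS.mixed_lt (hσ j j' hjj' hj hj') ((h j).colMixed hj) ((h j').colMixed hj') hq hq'
    omega

protected theorem raiseCol (hS : IsBenign a S) (A : ℕ) : IsBenign a (raiseCol a A S) := by
  refine hS.of_replacesColumn id (fun j => ?_) fun j j' hjj' _ _ => hjj'
  by_cases hj : j = A
  · refine replacesColumn_of_mem_iff_eq (.inl rfl) fun r y => ?_
    have hraise : ∀ x ∈ S r j, (if x = a + 1 then a else x) = a := fun x hx => by
      rcases hS.letter hx with rfl | rfl <;> simp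
    simp only [raiseCol, if_pos hj, Finset.mem_image, Finset.Nonempty]
    constructor
    · rintro ⟨x, hx, rfl⟩
      exact ⟨⟨x, hx⟩, hraise x hx⟩
    · rintro ⟨⟨x, hx⟩, rfl⟩
      exact ⟨x, hx, hraise x hx⟩
  · exact hS.replacesColumn_of_eq fun r => if_neg hj

end IsBenign

/-! ### Descent resolution terminates -/

theorem resFun_of_ne {j : ℕ} (hk : j ≠ k) (hk' : j ≠ k + 1) (r : ℕ) :
    resFun a S k r j = S r j := by
  simp only [resFun, if_neg hk, if_neg hk', ite_self]

theorem mem_resFun_left_of_pureA (hk : ColHas S k (a + 1)) (hA : ColPureA a S (k + 1)) (r y : ℕ) :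
    y ∈ resFun a S k r k ↔ (S r k).Nonempty ∧ y = a := by
  by_cases hka : ColHas S k a <;>
    simp [resFun, ColMixed, ColPureB, hA, hA.2, hk, hka, Finset.Nonempty, eq_comm]

theorem mem_resFun_right_of_pureB (hB : ColPureB a S k) (hk : ColHas S (k + 1) a) (r y : ℕ) :
    y ∈ resFun a S k r (k + 1) ↔ (S r (k + 1)).Nonempty ∧ y = a + 1 := by
  by_cases hkb : ColHas S (k + 1) (a + 1) <;>
    simp [resFun, ColMixed, ColPureA, hB, hB.2, hk, hkb, Finset.Nonempty, eq_comm]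

theorem mem_resFun_right_of_mixed (hM : ColMixed a S k) (hA : ColPureA a S (k + 1)) (r y : ℕ) :
    y ∈ resFun a S k r (k + 1) ↔ (S r (k + 1)).Nonempty ∧
      (r < sep a S k ∧ y = a ∨ r = sep a S k ∧ y ∈ S (sep a S k) k ∨
        sep a S k < r ∧ y = a + 1) := by
  have hcol : resFun a S k r (k + 1) = if (S r (k + 1)).Nonempty then
      (if r < sep a S k then {a} else if r = sep a S k then S r k else {a + 1}) else ∅ := by
    simp [resFun, hM, hA]
  rw [hcol]
  grind

theorem mem_resFun_left_of_mixed (hB : ColPureB a S k) (hM : ColMixed a S (k + 1)) (r y : ℕ) :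
    y ∈ resFun a S k r k ↔ (S r k).Nonempty ∧
      (r < botA a S (k + 1) ∧ y = a ∨
        r = botA a S (k + 1) ∧ y ∈ S (botA a S (k + 1)) (k + 1) ∨
        botA a S (k + 1) < r ∧ y = a + 1) := by
  have hnM : ¬ ColMixed a S k := fun h => hB.2 h.1
  have hcol : resFun a S k r k = if (S r k).Nonempty then
      (if r < botA a S (k + 1) then {a} else if r = botA a S (k + 1) then S r (k + 1)
        else {a + 1}) else ∅ := by
    simp [resFun, hM, hB, hnM]
  rw [hcol]
  grind

/-- The position of a nonempty column in the order `a`-pure (`0`), mixed (`1`),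
`(a + 1)`-pure (`2`). -/
noncomputable def columnRank (a : ℕ) (S : ℕ → ℕ → Finset ℕ) (j : ℕ) : ℕ :=
  (if ColHas S j a then 0 else 1) + if ColHas S j (a + 1) then 1 else 0

theorem columnRank_congr {j : ℕ} (h : ∀ r, S' r j = S r j) :
    columnRank a S' j = columnRank a S j := by
  have hcol (x : ℕ) : ColHas S' j x ↔ ColHas S j x := by simp only [ColHas, h]
  simp only [columnRank, hcol]

namespace IsBenign

theorem pure_of_descent (hS : IsBenign a S) (hd : Descent a S k) :
    ColPureA a S (k + 1) ∨ ColPureB a S k ∧ ColMixed a S (k + 1) := by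
  obtain ⟨r, hr, hr'⟩ := hd
  by_cases hb : ColHas S (k + 1) (a + 1)
  · have hM : ColMixed a S (k + 1) := ⟨⟨r, hr'⟩, hb⟩
    exact .inr ⟨⟨⟨r, hr⟩, fun ha => (hS.mixed_lt k.lt_succ_self ⟨ha, r, hr⟩ hM hr hr').false⟩, hM⟩
  · exact .inl ⟨⟨r, hr'⟩, hb⟩

theorem replacesColumn_resFun (hS : IsBenign a S) (hd : Descent a S k) (j : ℕ) :
    ReplacesColumn a S (resFun a S k) (Equiv.swap k (k + 1) j) j := by
  have hcases := hS.pure_of_descent hd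
  obtain ⟨r, hr, hr'⟩ := hd
  by_cases hk : j = k
  · subst j
    rw [Equiv.swap_apply_left]
    rcases hcases with hA | ⟨hB, hM⟩
    · exact replacesColumn_of_mem_iff_eq (.inl rfl) (mem_resFun_left_of_pureA ⟨r, hr⟩ hA)
    · exact hS.replacesColumn_of_split hM (hS.isTransitionRow_botA hM)
        (mem_resFun_left_of_mixed hB hM)
  by_cases hk' : j = k + 1
  · subst j
    rw [Equiv.swap_apply_right]
    by_cases ha : ColHas S k a
    · have hM : ColMixed a S k := ⟨ha, r, hr⟩
      have hA : ColPureA a S (k + 1) := hcases.resolve_right fun h => h.1.2 ha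
      exact hS.replacesColumn_of_split hM (hS.isTransitionRow_sep hM.2)
        (mem_resFun_right_of_mixed hM hA)
    · exact replacesColumn_of_mem_iff_eq (.inr rfl)
        (mem_resFun_right_of_pureB ⟨⟨r, hr⟩, ha⟩ ⟨r, hr'⟩)
  · rw [Equiv.swap_apply_of_ne_of_ne hk hk']
    exact hS.replacesColumn_of_eq (resFun_of_ne hk hk')

protected theorem resFun (hS : IsBenign a S) (hd : Descent a S k) : IsBenign a (resFun a S k) := by
  refine hS.of_replacesColumn _ (hS.replacesColumn_resFun hd) fun j j' hjj' hj hj' => ?_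
  have hne : ¬ (j = k ∧ j' = k + 1) := by
    rintro ⟨rfl, rfl⟩
    obtain ⟨r, hr, hr'⟩ := id hd
    rcases hS.pure_of_descent hd with hA | ⟨hB, -⟩
    · exact not_colMixed_of_mem_iff (mem_resFun_left_of_pureA ⟨r, hr⟩ hA) hj
    · exact not_colMixed_of_mem_iff (mem_resFun_right_of_pureB hB ⟨r, hr'⟩) hj'
  simp only [Equiv.swap_apply_def]
  split_ifs <;> omega

theorem columnRank_resFun_lt (hS : IsBenign a S) (hd : Descent a S k) :
    columnRank a (resFun a S k) k < columnRank a S k := by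
  have hcases := hS.pure_of_descent hd
  obtain ⟨r, hr, hr'⟩ := hd
  have hkb : ColHas S k (a + 1) := ⟨r, hr⟩
  rcases hcases with hA | ⟨hB, hM⟩
  · have hmem := mem_resFun_left_of_pureA hkb hA
    have ha : ColHas (resFun a S k) k a := ⟨r, (hmem r a).2 ⟨⟨_, hr⟩, rfl⟩⟩
    have hb : ¬ ColHas (resFun a S k) k (a + 1) := by simp [ColHas, hmem]
    simp [columnRank, ha, hb, hkb]
  · have hbot := hS.botA_mem hM
    have hle : r ≤ botA a S (k + 1) := (hS.isTransitionRow_botA hM).ge_of_mem hr'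
    have hsupp : (botA a S (k + 1), k) ∈ fillingSupport S :=
      hS.ordConnected.out (x := (r, k)) (y := (botA a S (k + 1), k + 1)) ⟨_, hr⟩ ⟨_, hbot⟩
        ⟨⟨hle, le_rfl⟩, le_rfl, k.le_succ⟩
    have ha : ColHas (resFun a S k) k a :=
      ⟨_, (mem_resFun_left_of_mixed hB hM _ a).2 ⟨hsupp, .inr (.inl ⟨rfl, hbot⟩)⟩⟩
    simp only [columnRank, ha, hB.1, hB.2, if_true, if_false]
    split_ifs <;> omega

theorem exists_resolution (hS : IsBenign a S) {W : ℕ} (hW : ∀ p ∈ fillingSupport S, p.2 < W) :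
    ∃ S', Relation.ReflTransGen (ResStep a) S S' ∧ ∀ k, ¬ Descent a S' k := by
  induction hw : toLex (fun j : Fin W => columnRank a S j) using WellFoundedLT.induction
    generalizing S with
  | ind w ih =>
    by_cases hd : ∃ k, Descent a S k
    · obtain ⟨k, hk⟩ := hd
      have hkW : k < W := by
        obtain ⟨r, hr, -⟩ := hk
        exact hW (r, k) ⟨_, hr⟩
      have hlt : toLex (fun j : Fin W => columnRank a (resFun a S k) j) < w := by
        subst hw
        refine ⟨⟨k, hkW⟩, fun j hj => ?_, hS.columnRank_resFun_lt hk⟩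
        have hjk : j.1 < k := hj
        exact columnRank_congr (resFun_of_ne (by omega) (by omega))
      obtain ⟨S', hreach, hS'⟩ := ih _ hlt (hS.resFun hk)
        (fun p hp => hW p (((hS.replacesColumn_resFun hk p.2).nonempty_iff p.1).1 hp)) rfl
      exact ⟨S', .head ⟨k, hk, rfl⟩ hreach, hS'⟩
    · exact ⟨S, .refl, not_exists.1 hd⟩

end IsBenign

end Benign

/-! ### Highest weight elements -/

theorem mem_restrictTwo {i r j x : ℕ} :
    x ∈ restrictTwo i T r j ↔ x ∈ T r j ∧ (x = i ∨ x = i + 1) :=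
  Finset.mem_filter

theorem colHas_restrictTwo_left {i j : ℕ} : ColHas (restrictTwo i T) j i ↔ ColHas T j i := by
  simp only [ColHas, mem_restrictTwo, true_or, and_true]

theorem colHas_restrictTwo_right {i j : ℕ} :
    ColHas (restrictTwo i T) j (i + 1) ↔ ColHas T j (i + 1) := by
  simp only [ColHas, mem_restrictTwo, or_true, and_true]

theorem IsSVRPP.isBenign_restrictTwo (hlam : Antitone lam) (hmu : Antitone mu)
    (hT : IsSVRPP lam mu T) (i : ℕ) : IsBenign i (restrictTwo i T) where
  ordConnected := by
    refine ⟨?_⟩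
    rintro ⟨r, j⟩ ⟨x, hx⟩ ⟨r', j'⟩ ⟨y, hy⟩ ⟨s, k⟩ ⟨⟨hrs, hjk⟩, hsr', hkj'⟩
    dsimp only at hx hy hrs hjk hsr' hkj'
    rw [mem_restrictTwo] at hx hy
    rcases (show (r < s ∧ j ≤ k ∨ r ≤ s ∧ j < k) ∨ r = s ∧ j = k by omega) with hlt | ⟨rfl, rfl⟩
    swap
    · exact ⟨x, mem_restrictTwo.2 hx⟩
    rcases (show (s < r' ∧ k ≤ j' ∨ s ≤ r' ∧ k < j') ∨ s = r' ∧ k = j' by omega) with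
      hlt' | ⟨rfl, rfl⟩
    swap
    · exact ⟨y, mem_restrictTwo.2 hy⟩
    obtain ⟨z, hz⟩ := hT.exists_mem <|
      (hT.inShape_of_mem hx.1).of_le_of_le hlam hmu (hT.inShape_of_mem hy.1) hrs hsr' hjk hkj'
    have hxz := hT.le_of_mem hlam hmu hlt hx.1 hz
    have hzy := hT.le_of_mem hlam hmu hlt' hz hy.1
    exact ⟨z, mem_restrictTwo.2 ⟨hz, by omega⟩⟩
  letter hx := (mem_restrictTwo.1 hx).2
  column_sorted {r r' j} hr hr' := by
    by_contra! h
    have := hT.le_of_mem hlam hmu (.inl ⟨h, le_rfl⟩) (mem_restrictTwo.1 hr).1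
      (mem_restrictTwo.1 hr').1
    omega
  mixed_lt {j j' r r'} hjj' _ _ hr hr' := by
    by_contra! h
    have := hT.le_of_mem hlam hmu (.inr ⟨h, hjj'⟩) (mem_restrictTwo.1 hr).1
      (mem_restrictTwo.1 hr').1
    omega

theorem IsSVRPP.exists_eRel (hlam : Antitone lam) (hmu : Antitone mu) (hT : IsSVRPP lam mu T)
    {i A : ℕ} (hA : LeftmostUnpairedMinus i T A) : ∃ T', ERel i T T' := by
  have hbenign := hT.isBenign_restrictTwo hlam hmu i
  have hW : ∀ p ∈ fillingSupport (raiseCol i A (restrictTwo i T)), p.2 < lam 0 := by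
    rintro ⟨r, j⟩ ⟨x, hx⟩
    obtain ⟨y, hy⟩ : (restrictTwo i T r j).Nonempty := by
      simp only [raiseCol] at hx
      split_ifs at hx
      exacts [Finset.image_nonempty.1 ⟨x, hx⟩, ⟨x, hx⟩]
    exact hT.lt_of_colHas hlam ⟨r, (mem_restrictTwo.1 hy).1⟩
  obtain ⟨S', hreach, hS'⟩ := (hbenign.raiseCol A).exists_resolution hW
  exact ⟨_, A, S', hA, hreach, hS', rfl⟩

/-- The columns with index at least `p` that contain the letter `v`. -/
def columnsFrom (T : ℕ → ℕ → Finset ℕ) (v p : ℕ) : Set ℕ :=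
  {j | p ≤ j ∧ ColHas T j v}

/-- The analogue for fillings of the Yamanouchi condition on words: among the columns with index at
least `p`, each letter occurs at least as often as its successor. -/
def HasDominantSuffixes (T : ℕ → ℕ → Finset ℕ) : Prop :=
  ∀ i, 1 ≤ i → ∀ p, (columnsFrom T (i + 1) p).ncard ≤ (columnsFrom T i p).ncard

theorem ircont_eq_ncard_columnsFrom (T : ℕ → ℕ → Finset ℕ) (v : ℕ) :
    ircont T v = (columnsFrom T v 0).ncard := by
  simp only [ircont, columnsFrom, ColHas, zero_le, true_and]

theorem HasDominantSuffixes.ncard_columnsFrom_le (hdom : HasDominantSuffixes T) {v w : ℕ}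
    (hv : 1 ≤ v) (hvw : v ≤ w) (p : ℕ) :
    (columnsFrom T w p).ncard ≤ (columnsFrom T v p).ncard := by
  induction w, hvw using Nat.le_induction with
  | base => exact le_rfl
  | succ w hvw ih => exact (hdom w (hv.trans hvw) p).trans ih

theorem exists_last_maximizer {β : Type*} [LinearOrder β] {f : ℕ → β} {c : β} {N p : ℕ}
    (hc : ∀ q, N ≤ q → f q = c) (hp : c < f p) :
    ∃ A, (∀ q, f q ≤ f A) ∧ ∀ q, A < q → f q < f A := by
  have hpN : p < N := by
    by_contra! h
    exact hp.ne' (hc p h)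
  obtain ⟨A, -, hmax⟩ := Finset.exists_max_image (Finset.range N) (fun q => toLex (f q, q))
    ⟨p, Finset.mem_range.2 hpN⟩
  simp only [Finset.mem_range, Prod.Lex.toLex_le_toLex] at hmax
  have hle : ∀ q < N, f q ≤ f A := fun q hq => (hmax q hq).elim le_of_lt fun h => h.1.le
  have hcA : c < f A := hp.trans_le (hle p hpN)
  refine ⟨A, fun q => ?_, fun q hAq => ?_⟩
  · rcases lt_or_ge q N with hq | hq
    · exact hle q hq
    · exact hc q hq ▸ hcA.le
  · rcases lt_or_ge q N with hq | hq
    · exact (hmax q hq).resolve_right fun h => hAq.not_ge h.2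
    · exact hc q hq ▸ hcA

namespace IsSVRPP

theorem finite_columnsFrom (hlam : Antitone lam) (hT : IsSVRPP lam mu T) (v p : ℕ) :
    (columnsFrom T v p).Finite :=
  (hT.finite_colHas hlam v).subset fun _ hj => hj.2

theorem columnsFrom_eq_empty (hlam : Antitone lam) (hT : IsSVRPP lam mu T) (v : ℕ) {p : ℕ}
    (hp : lam 0 ≤ p) : columnsFrom T v p = ∅ :=
  Set.eq_empty_of_forall_notMem fun _ hj => (hT.lt_of_colHas hlam hj.2).not_ge (hp.trans hj.1)

theorem ncard_columnsFrom (hlam : Antitone lam) (hT : IsSVRPP lam mu T) (v p : ℕ) :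
    (columnsFrom T v p).ncard =
      (columnsFrom T v (p + 1)).ncard + if ColHas T p v then 1 else 0 := by
  split_ifs with h
  · have hinsert : columnsFrom T v p = insert p (columnsFrom T v (p + 1)) := by
      ext j
      have : j = p → ColHas T j v := (· ▸ h)
      grind [columnsFrom]
    rw [hinsert, Set.ncard_insert_of_notMem (fun hp => absurd hp.1 (by omega))
      (hT.finite_columnsFrom hlam v (p + 1))]
  · have hsame : columnsFrom T v p = columnsFrom T v (p + 1) := by
      ext j
      have : j = p → ¬ ColHas T j v := (· ▸ h)
      grind [columnsFrom]
    rw [hsame, add_zero]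

theorem fsuffix_eq (hlam : Antitone lam) (hT : IsSVRPP lam mu T) (i p : ℕ) :
    fsuffix i T p = ((columnsFrom T (i + 1) p).ncard : ℤ) - (columnsFrom T i p).ncard := by
  have hB : {j | p ≤ j ∧ ColPureB i (restrictTwo i T) j} =
      columnsFrom T (i + 1) p \ columnsFrom T i p := by
    ext j
    simp only [ColPureB, colHas_restrictTwo_left, colHas_restrictTwo_right]
    grind [columnsFrom]
  have hA : {j | p ≤ j ∧ ColPureA i (restrictTwo i T) j} =
      columnsFrom T i p \ columnsFrom T (i + 1) p := by
    ext j
    simp only [ColPureA, colHas_restrictTwo_left, colHas_restrictTwo_right]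
    grind [columnsFrom]
  have hcardB := Set.ncard_inter_add_ncard_sdiff_eq_ncard _ (columnsFrom T i p)
    (hT.finite_columnsFrom hlam (i + 1) p)
  have hcardA := Set.ncard_inter_add_ncard_sdiff_eq_ncard _ (columnsFrom T (i + 1) p)
    (hT.finite_columnsFrom hlam i p)
  rw [Set.inter_comm] at hcardA
  rw [fsuffix, hA, hB]
  omega

theorem exists_leftmostUnpairedMinus (hlam : Antitone lam) (hT : IsSVRPP lam mu T) {i p : ℕ}
    (hp : (columnsFrom T i p).ncard < (columnsFrom T (i + 1) p).ncard) :
    ∃ A, LeftmostUnpairedMinus i T A := by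
  have hzero : ∀ q, lam 0 ≤ q → fsuffix i T q = 0 := fun q hq => by
    rw [hT.fsuffix_eq hlam, hT.columnsFrom_eq_empty hlam _ hq, hT.columnsFrom_eq_empty hlam _ hq,
      sub_self]
  have hpos : 0 < fsuffix i T p := by
    rw [hT.fsuffix_eq hlam]
    omega
  obtain ⟨A, hmax, hlast⟩ := exists_last_maximizer hzero hpos
  refine ⟨A, ?_, hmax, hlast⟩
  have hdrop := hlast (A + 1) A.lt_succ_self
  rw [hT.fsuffix_eq hlam, hT.fsuffix_eq hlam, hT.ncard_columnsFrom hlam i A,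
    hT.ncard_columnsFrom hlam (i + 1) A] at hdrop
  rw [ColPureB, colHas_restrictTwo_left, colHas_restrictTwo_right]
  split_ifs at hdrop with hb ha ha
  all_goals first | exact ⟨hb, ha⟩ | omega

theorem ncard_columnsFrom_le_of_eOp_eq_none (hlam : Antitone lam) (hmu : Antitone mu)
    (hT : IsSVRPP lam mu T) {i : ℕ} (h : eOp i T = none) (p : ℕ) :
    (columnsFrom T (i + 1) p).ncard ≤ (columnsFrom T i p).ncard := by
  by_contra! hp
  obtain ⟨A, hA⟩ := hT.exists_leftmostUnpairedMinus hlam hp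
  simp [eOp, hT.exists_eRel hlam hmu hA] at h

end IsSVRPP

theorem IsSVRPPn.columnsFrom_eq_empty {n : ℕ} (hT : IsSVRPPn lam mu n T) {v : ℕ}
    (hv : v < 1 ∨ n < v) (p : ℕ) : columnsFrom T v p = ∅ := by
  refine Set.eq_empty_of_forall_notMem fun j ⟨_, r, hr⟩ => ?_
  have := Finset.mem_Icc.1 (hT.2 r j hr)
  omega

theorem IsSVRPPn.hasDominantSuffixes (hlam : Antitone lam) (hmu : Antitone mu) {n : ℕ}
    (hT : IsSVRPPn lam mu n T) (hhw : ∀ i, 1 ≤ i → i < n → eOp i T = none) :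
    HasDominantSuffixes T := by
  intro i hi p
  rcases lt_or_ge i n with hin | hin
  · exact hT.1.ncard_columnsFrom_le_of_eOp_eq_none hlam hmu (hhw i hi hin) p
  · simp [hT.columnsFrom_eq_empty (v := i + 1) (by omega)]

/-! ### Bounds on the weight -/

/-- The columns that contain the letter `v` strictly above row `r`. -/
def columnsAbove (T : ℕ → ℕ → Finset ℕ) (v r : ℕ) : Set ℕ :=
  {j | ∃ s < r, v ∈ T s j}

namespace IsSVRPP

theorem finite_columnsAbove (hlam : Antitone lam) (hT : IsSVRPP lam mu T) (v r : ℕ) :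
    (columnsAbove T v r).Finite :=
  (hT.finite_colHas hlam v).subset fun _ ⟨s, _, hs⟩ => ⟨s, hs⟩

theorem columnsAbove_succ_subset (hlam : Antitone lam) (hmu : Antitone mu)
    (hT : IsSVRPP lam mu T) {v r j : ℕ} (hj : v ∈ T r j) (hleft : ∀ j' < j, v ∉ T r j') :
    columnsAbove T v (r + 1) ⊆ insert j (columnsFrom T v (j + 1)) := by
  rintro j' ⟨s, hs, hv⟩
  rcases lt_trichotomy j' j with hlt | rfl | hlt
  · exfalso
    have hsr : s < r := by
      have : s ≠ r := by
        rintro rfl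
        exact hleft j' hlt hv
      omega
    obtain ⟨z, hz⟩ := hT.exists_mem <| (hT.inShape_of_mem hv).of_le_of_le hlam hmu
      (hT.inShape_of_mem hj) hsr.le le_rfl le_rfl hlt.le
    have hzv : z = v :=
      (hT.le_of_mem_row hlt hz hj).antisymm (hT.le_of_mem_column hlam hmu hsr hv hz)
    exact hleft j' hlt (hzv ▸ hz)
  · exact .inl rfl
  · exact .inr ⟨hlt, s, hv⟩

theorem columnsFrom_subset_columnsAbove (hlam : Antitone lam) (hmu : Antitone mu)
    (hT : IsSVRPP lam mu T) {v w r j : ℕ} (hvw : v < w) (hj : w ∈ T r j) :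
    columnsFrom T v (j + 1) ⊆ columnsAbove T v r := by
  rintro j' ⟨hjj', s, hs⟩
  refine ⟨s, ?_, hs⟩
  by_contra! hrs
  exact hvw.not_ge (hT.le_of_mem hlam hmu (.inr ⟨hrs, hjj'⟩) hj hs)

theorem ncard_columnsAbove_le (hlam : Antitone lam) (hmu : Antitone mu)
    (hT : IsSVRPP lam mu T) (hdom : HasDominantSuffixes T) {r v : ℕ} (hrv : r < v) :
    (columnsAbove T v r).ncard ≤ r := by
  induction r generalizing v with
  | zero => simp [columnsAbove]
  | succ r ih =>
    by_cases hrow : ∃ j, v ∈ T r j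
    · obtain ⟨w, rfl⟩ : ∃ w, v = w + 1 := ⟨v - 1, by omega⟩
      have hj := Nat.find_spec hrow
      set j := Nat.find hrow
      have hsub := hT.columnsAbove_succ_subset hlam hmu hj fun j' => Nat.find_min hrow
      calc (columnsAbove T (w + 1) (r + 1)).ncard
          ≤ (insert j (columnsFrom T (w + 1) (j + 1))).ncard :=
            Set.ncard_le_ncard hsub ((hT.finite_columnsFrom hlam _ _).insert j)
        _ ≤ (columnsFrom T (w + 1) (j + 1)).ncard + 1 := Set.ncard_insert_le _ _
        _ ≤ (columnsFrom T w (j + 1)).ncard + 1 := Nat.add_le_add_right (hdom w (by omega) _) 1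
        _ ≤ (columnsAbove T w r).ncard + 1 := Nat.add_le_add_right
            (Set.ncard_le_ncard (hT.columnsFrom_subset_columnsAbove hlam hmu w.lt_succ_self hj)
              (hT.finite_columnsAbove hlam w r)) 1
        _ ≤ r + 1 := Nat.add_le_add_right (ih (by omega)) 1
    · have hsub : columnsAbove T v (r + 1) ⊆ columnsAbove T v r := by
        rintro j ⟨s, hs, hv⟩
        have hsr : s ≠ r := by
          rintro rfl
          exact hrow ⟨j, hv⟩
        exact ⟨s, by omega, hv⟩
      calc (columnsAbove T v (r + 1)).ncard
          ≤ (columnsAbove T v r).ncard := Set.ncard_le_ncard hsub (hT.finite_columnsAbove hlam v r)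
        _ ≤ r := ih (by omega)
        _ ≤ r + 1 := r.le_succ

theorem ircont_le_add (hlam : Antitone lam) (hmu : Antitone mu) (hT : IsSVRPP lam mu T)
    (hdom : HasDominantSuffixes T) {r v : ℕ} (hrv : r < v) : ircont T v ≤ lam r + r := by
  have hsub : {j | ∃ i, v ∈ T i j} ⊆ Set.Iio (lam r) ∪ columnsAbove T v r := by
    rintro j ⟨s, hs⟩
    rcases lt_or_ge s r with hsr | hrs
    · exact .inr ⟨s, hsr, hs⟩
    · exact .inl ((hT.inShape_of_mem hs).2.trans_le (hlam hrs))
  calc ircont T v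
      ≤ (Set.Iio (lam r) ∪ columnsAbove T v r).ncard :=
        Set.ncard_le_ncard hsub ((Set.finite_Iio _).union (hT.finite_columnsAbove hlam v r))
    _ ≤ (Set.Iio (lam r)).ncard + (columnsAbove T v r).ncard := Set.ncard_union_le _ _
    _ ≤ lam r + r := by
        gcongr
        · simp
        · exact hT.ncard_columnsAbove_le hlam hmu hdom hrv

theorem sub_le_ircont_one (hlam : Antitone lam) (hmu : Antitone mu) (hT : IsSVRPP lam mu T)
    (hdom : HasDominantSuffixes T) : lam 0 - mu 0 ≤ ircont T 1 := by
  have hsub : Set.Ico (mu 0) (lam 0) ⊆ {j | ColHas T j 1} := by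
    intro j hj
    obtain ⟨z, hz⟩ := hT.exists_mem (r := 0) hj
    have hone : (columnsFrom T 1 j).Nonempty := by
      have hzpos := (Set.ncard_pos (hT.finite_columnsFrom hlam z j)).2 ⟨j, le_rfl, 0, hz⟩
      exact (Set.ncard_pos (hT.finite_columnsFrom hlam 1 j)).1
        (hzpos.trans_le (hdom.ncard_columnsFrom_le le_rfl (hT.one_le_of_mem hz) j))
    obtain ⟨j', hjj', r, hr⟩ := hone
    rcases (show (0 < r ∧ j ≤ j' ∨ 0 ≤ r ∧ j < j') ∨ r = 0 ∧ j' = j by omega) with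
      hlt | ⟨rfl, rfl⟩
    · have hz1 : z = 1 := (hT.le_of_mem hlam hmu hlt hz hr).antisymm (hT.one_le_of_mem hz)
      exact ⟨0, hz1 ▸ hz⟩
    · exact ⟨0, hr⟩
  calc lam 0 - mu 0 = (Set.Ico (mu 0) (lam 0)).ncard := by simp
    _ ≤ ircont T 1 := Set.ncard_le_ncard hsub (hT.finite_colHas hlam 1)

end IsSVRPP

theorem antitone_flatPart (lam : ℕ → ℕ) : Antitone (flatPart lam) :=
  antitone_nat_of_succ_le fun _ => (min_le_left _ _).trans (Nat.sub_le _ _)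

theorem flatPart_le_sub (lam : ℕ → ℕ) (r : ℕ) : flatPart lam r ≤ lam 0 - r := by
  induction r with
  | zero => exact le_rfl
  | succ r ih => exact (min_le_left _ _).trans (by omega)

theorem exists_add_le_flatPart_add (lam : ℕ → ℕ) (r : ℕ) :
    ∃ s ≤ r, lam s + s ≤ flatPart lam r + r := by
  induction r with
  | zero => exact ⟨0, le_rfl, le_rfl⟩
  | succ r ih =>
    obtain ⟨s, hs, hle⟩ := ih
    simp only [flatPart]
    rcases min_choice (flatPart lam r - 1) (lam (r + 1)) with h | h <;> rw [h]
    · exact ⟨s, by omega, by omega⟩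
    · exact ⟨r + 1, le_rfl, le_rfl⟩

theorem flatPart_kFlat (lam : ℕ → ℕ) : flatPart lam (kFlat lam) = 0 := by
  by_contra hpos
  have hsub : Set.Iic (kFlat lam) ⊆ {i | 0 < flatPart lam i} := fun i hi =>
    (Nat.pos_of_ne_zero hpos).trans_le (antitone_flatPart lam hi)
  have hfin : {i | 0 < flatPart lam i}.Finite := by
    refine (Set.finite_Iio (lam 0)).subset fun i (hi : 0 < flatPart lam i) => ?_
    have := flatPart_le_sub lam i
    exact Set.mem_Iio.2 (by omega)
  have hcard : (Set.Iic (kFlat lam)).ncard ≤ kFlat lam := Set.ncard_le_ncard hsub hfin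
  simp at hcard

theorem IsSVRPPn.ircont_le_barLam (hlam : Antitone lam) (hmu : Antitone mu) {n : ℕ}
    (hT : IsSVRPPn lam mu n T) (hdom : HasDominantSuffixes T) (v : ℕ) :
    ircont T v ≤ barLam lam n v := by
  unfold barLam
  split_ifs with hv hvk
  · obtain ⟨s, hs, hle⟩ := exists_add_le_flatPart_add lam (v - 1)
    exact (hT.1.ircont_le_add hlam hmu hdom (by omega)).trans hle
  · obtain ⟨s, hs, hle⟩ := exists_add_le_flatPart_add lam (kFlat lam)
    rw [flatPart_kFlat, zero_add] at hle
    exact (hT.1.ircont_le_add hlam hmu hdom (by omega)).trans hle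
  · rw [ircont_eq_ncard_columnsFrom, hT.columnsFrom_eq_empty (by omega), Set.ncard_empty]

theorem highest_weight_wt_between_general (hlam : Antitone lam) (hmu : Antitone mu) {n : ℕ}
    (hT : IsSVRPPn lam mu n T) (hhw : ∀ i, 1 ≤ i → i < n → eOp i T = none) :
    (lam 0 - mu 0 ≤ ircont T 1 ∧ ircont T 1 ≤ lam 0) ∧
    (∀ v, 1 ≤ v → ircont T (v + 1) ≤ ircont T v) ∧
    (∀ v, ircont T v ≤ barLam lam n v) := by
  have hdom := hT.hasDominantSuffixes hlam hmu hhw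
  refine ⟨⟨hT.1.sub_le_ircont_one hlam hmu hdom, hT.1.ircont_le_add hlam hmu hdom one_pos⟩,
    fun v hv => ?_, hT.ircont_le_barLam hlam hmu hdom⟩
  simpa only [ircont_eq_ncard_columnsFrom] using hdom v hv 0

/-- For any partition `lam` and any `n ≥ 1`, if `T ∈ SVRPP^n(lam)` is a
highest weight element with `wt(T) = ρ`, then `ρ` is a partition with
`(λ_1) ⊆ ρ ⊆ λ̄^{(n)}`: `ρ_1 = λ_1`, `ρ` is weakly decreasing, and `ρ_v ≤ λ̄^{(n)}_v`
for all `v`. (Here `ρ v = ircont T v`, 1-indexed.) -/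
theorem highest_weight_wt_between (lam : ℕ → ℕ) (hlam : IsPartitionFun lam)
    (n : ℕ) (hn : 1 ≤ n) (T : ℕ → ℕ → Finset ℕ)
    (hT : IsSVRPPn lam (fun _ => 0) n T)
    (hhw : ∀ i, 1 ≤ i → i < n → eOp i T = none) :
    ircont T 1 = lam 0 ∧
    (∀ v, 1 ≤ v → ircont T (v + 1) ≤ ircont T v) ∧
    (∀ v, ircont T v ≤ barLam lam n v) := by
  obtain ⟨⟨hge, hle⟩, hwt⟩ :=
    highest_weight_wt_between_general (antitone_nat_of_succ_le hlam.1) antitone_const hT hhw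
  exact ⟨hle.antisymm hge, hwt⟩
end

section
/- For every fixed partition μ, the operators ũ_i = u_i(1 + d_{μ,i}) (i ≥ 1) on the free Z[α,β]-module with basis the partitions containing μ satisfy the Fomin–Greene relations: (i) ũ_i ũ_k ũ_j = ũ_k ũ_i ũ_j for all i < j < k; (ii) ũ_j ũ_k ũ_i = ũ_j ũ_i ũ_k for all i < j < k; (iii) ũ_j (ũ_i ũ_j − ũ_j ũ_i) = (ũ_i ũ_j − ũ_j ũ_i) ũ_i for all i < j. -/
open scoped Classical

/-- The coefficient ring `ℤ[α, β]`, with `α = X 0` and `β = X 1`. -/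
abbrev RAB : Type := MvPolynomial (Fin 2) ℤ

/-- Partitions containing `mu` (componentwise). -/
def PartAbove (mu : ℕ → ℕ) : Type :=
  {l : ℕ → ℕ // IsPartitionFun l ∧ ∀ i, mu i ≤ l i}

/-- The module of formal `ℤ[α,β]`-linear combinations of partitions containing `mu`
(a partition `l` is identified with the delta function at `l`). -/
def ModAbove (mu : ℕ → ℕ) : Type := PartAbove mu → RAB

/-- The height of column `c` (0-indexed) of the partition `l`. -/
noncomputable def colHeight (l : ℕ → ℕ) (c : ℕ) : ℕ :=
  Set.ncard {r : ℕ | c < l r}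

/-- `AddCol c a l nu`: the partition `nu` is obtained from `l` by adding `a ≥ 1` boxes to
the bottom of the `c`-th column (the rows receiving a new box must currently have exactly
`c` boxes, so that the result is a valid partition). -/
def AddCol (c a : ℕ) (l nu : ℕ → ℕ) : Prop :=
  1 ≤ a ∧
  (∀ r, colHeight l c ≤ r → r < colHeight l c + a → l r = c) ∧
  nu = fun r => if colHeight l c ≤ r ∧ r < colHeight l c + a then c + 1 else l r

/-- The column-adding operator `u_c`: on a basis partition `l`,
`u_c · l = Σ_{a ≥ 1} α^{a−1} (l ∪ {a boxes in column c})`, the sum being over all valid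
`a` (and `0` if there are none). Written out on formal sums: the coefficient of `nu` in
`u_c f` is `Σ_{a, l : AddCol c a l nu} α^{a−1} · (f l)`. -/
noncomputable def uOp {mu : ℕ → ℕ} (c : ℕ) (f : ModAbove mu) : ModAbove mu :=
  fun nu => ∑ᶠ a : ℕ, ∑ᶠ l : PartAbove mu,
    if AddCol c a l.1 nu.1 then (MvPolynomial.X 0 : RAB) ^ (a - 1) * f l else 0

/-- The Schur operator `d_{mu,c}`: on a basis partition `l`, `d_{mu,c} · l = β · nu` if
removing the bottom box of the `c`-th column of `l` yields a valid partition `nu`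
containing `mu`, and `0` otherwise. (Removing a box from `l` giving `nu` is the same as
adding one box to `nu` giving `l`.) -/
noncomputable def dOp {mu : ℕ → ℕ} (c : ℕ) (f : ModAbove mu) : ModAbove mu :=
  fun nu => ∑ᶠ l : PartAbove mu,
    if AddCol c 1 nu.1 l.1 then (MvPolynomial.X 1 : RAB) * f l else 0

/-- The operator `ũ_c = u_c (1 + d_{mu,c})`. -/
noncomputable def tuOp {mu : ℕ → ℕ} (c : ℕ) (f : ModAbove mu) : ModAbove mu :=
  uOp c (fun nu => f nu + dOp c f nu)

/-!
Transposing identifies a partition with its sequence of column heights `h`. The operator `ũ_c`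
changes only the height of column `c`, within the bounds imposed by `h (c + 1)` from below and by
the old value of `h c` from above, so it becomes a weighted sum over one integer variable.
Operators on non-adjacent columns involve disjoint data and commute, which gives (i), (ii), and
makes both sides of (iii) vanish.

For adjacent columns `i`, `i + 1`, with heights `x ≥ y` and operators `L`, `R`, the recursion of
the weighted sums in `x` gives `(LR - RL) G (x, y) = -α ^ (x - y) (RL G) (y, y)`. Applying `R` and
using the recursion in `y`, one finds `R (LR - RL) G (x, y) = -α ^ (x - y) (RLL G) (y, y)`, and the
right-hand side is `(LR - RL) L G (x, y)` by the commutator formula again.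
-/

open Finset Function

namespace IsPartitionFun

variable {l l' : ℕ → ℕ}

protected theorem antitone (hl : IsPartitionFun l) : Antitone l :=
  antitone_nat_of_succ_le hl.1

theorem lt_colHeight_iff (hl : IsPartitionFun l) {r c : ℕ} : r < colHeight l c ↔ c < l r := by
  have hex : ∃ n, l n ≤ c := hl.2.imp fun N hN => by simp [hN N le_rfl]
  have hrows : {r | c < l r} = Set.Iio (Nat.find hex) := by
    ext s
    refine ⟨fun hs => ?_, fun hs => not_le.1 (Nat.find_min hex hs)⟩
    by_contra hle
    exact (((hl.antitone (not_lt.1 hle)).trans (Nat.find_spec hex)).trans_lt hs).false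
  rw [colHeight, hrows, Set.ncard_Iio_nat]
  exact (Set.ext_iff.1 hrows r).symm

theorem colHeight_mono (hl : IsPartitionFun l) (hl' : IsPartitionFun l') (h : l ≤ l') :
    colHeight l ≤ colHeight l' := fun _ =>
  le_of_forall_lt fun r hr =>
    hl'.lt_colHeight_iff.2 ((hl.lt_colHeight_iff.1 hr).trans_le (h r))

protected theorem colHeight (hl : IsPartitionFun l) : IsPartitionFun (colHeight l) := by
  refine ⟨fun c => le_of_forall_lt fun r hr => ?_, l 0, fun c hc => ?_⟩
  · exact hl.lt_colHeight_iff.2 ((Nat.lt_succ_self c).trans (hl.lt_colHeight_iff.1 hr))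
  · by_contra hpos
    exact (hl.lt_colHeight_iff.1 (Nat.pos_of_ne_zero hpos)).not_ge hc

theorem colHeight_colHeight (hl : IsPartitionFun l) : colHeight (colHeight l) = l :=
  funext fun _ => eq_of_forall_lt_iff fun _ => by
    rw [hl.colHeight.lt_colHeight_iff, hl.lt_colHeight_iff]

protected theorem update {h : ℕ → ℕ} (hh : IsPartitionFun h) {c b : ℕ} (hlow : h (c + 1) ≤ b)
    (hup : b ≤ h c) : IsPartitionFun (update h c b) := by
  refine ⟨fun i => ?_, hh.2.imp fun N hN i hi => ?_⟩
  · have := hh.1 i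
    grind
  · have := hN i hi
    grind

end IsPartitionFun

section AddCol

variable {l nu : ℕ → ℕ} {c a : ℕ}

theorem AddCol.colHeight_eq_update (hl : IsPartitionFun l) (hnu : IsPartitionFun nu)
    (h : AddCol c a l nu) : colHeight nu = update (colHeight l) c (colHeight l c + a) := by
  obtain ⟨-, hrow, hnu_eq⟩ := h
  funext c'
  refine eq_of_forall_lt_iff fun r => ?_
  have hc := hl.lt_colHeight_iff (r := r) (c := c)
  have hc' := hl.lt_colHeight_iff (r := r) (c := c')
  have := hrow r
  rw [hnu.lt_colHeight_iff, hnu_eq]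
  grind

theorem addCol_of_colHeight_eq_update (hl : IsPartitionFun l) (hnu : IsPartitionFun nu)
    (ha : 1 ≤ a) (h : colHeight nu = update (colHeight l) c (colHeight l c + a)) :
    AddCol c a l nu := by
  have lt_nu_self (r : ℕ) : c < nu r ↔ r < colHeight l c + a := by
    rw [← hnu.lt_colHeight_iff, h, update_self]
  have lt_nu_of_ne (r : ℕ) {c' : ℕ} (hc' : c' ≠ c) : c' < nu r ↔ c' < l r := by
    rw [← hnu.lt_colHeight_iff, h, update_of_ne hc', hl.lt_colHeight_iff]
  have row_eq (r : ℕ) (hlow : colHeight l c ≤ r) (hup : r < colHeight l c + a) : l r = c := by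
    refine le_antisymm (not_lt.1 fun hlt => (hl.lt_colHeight_iff.2 hlt).not_ge hlow) ?_
    exact le_of_forall_lt fun c' hc' =>
      (lt_nu_of_ne r hc'.ne).1 (hc'.trans ((lt_nu_self r).2 hup))
  refine ⟨ha, row_eq, funext fun r => eq_of_forall_lt_iff fun c' => ?_⟩
  have hc := hl.lt_colHeight_iff (r := r) (c := c)
  have := row_eq r
  rcases eq_or_ne c' c with rfl | hc'
  · rw [lt_nu_self]
    split_ifs <;> omega
  · rw [lt_nu_of_ne r hc']
    split_ifs <;> omega

theorem addCol_iff_colHeight_eq_update_sub (hl : IsPartitionFun l) (hnu : IsPartitionFun nu) :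
    AddCol c a l nu ↔ 1 ≤ a ∧ a ≤ colHeight nu c ∧
      colHeight l = update (colHeight nu) c (colHeight nu c - a) := by
  constructor
  · intro h
    rw [h.colHeight_eq_update hl hnu]
    simp [h.1]
  · rintro ⟨ha, hle, h⟩
    refine addCol_of_colHeight_eq_update hl hnu ha ?_
    simp [h, Nat.sub_add_cancel hle]

end AddCol

namespace PartAbove

variable {mu : ℕ → ℕ} {c b : ℕ}

theorem colHeight_injective : Injective fun l : PartAbove mu => colHeight l.1 := fun l l' h =>
  Subtype.ext <| by
    rw [← l.2.1.colHeight_colHeight, ← l'.2.1.colHeight_colHeight]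
    exact congrArg colHeight h

theorem colHeight_le (hmu : IsPartitionFun mu) (l : PartAbove mu) :
    colHeight mu ≤ colHeight l.1 :=
  hmu.colHeight_mono l.2.1 l.2.2

theorem exists_colHeight_eq (hmu : IsPartitionFun mu) {h : ℕ → ℕ} (hh : IsPartitionFun h)
    (hle : colHeight mu ≤ h) : ∃ l : PartAbove mu, colHeight l.1 = h :=
  ⟨⟨colHeight h, hh.colHeight, hmu.colHeight_colHeight.symm.trans_le
    (hmu.colHeight.colHeight_mono hh hle)⟩, hh.colHeight_colHeight⟩

theorem exists_colHeight_eq_update (hmu : IsPartitionFun mu) (nu : PartAbove mu)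
    (hlow : max (colHeight nu.1 (c + 1)) (colHeight mu c) ≤ b) (hup : b ≤ colHeight nu.1 c) :
    ∃ l : PartAbove mu, colHeight l.1 = update (colHeight nu.1) c b := by
  obtain ⟨hnext, hmu_c⟩ := max_le_iff.1 hlow
  exact exists_colHeight_eq hmu (nu.2.1.colHeight.update hnext hup)
    (le_update_iff.2 ⟨hmu_c, fun i _ => colHeight_le hmu nu i⟩)

theorem max_le_of_colHeight_eq_update (hmu : IsPartitionFun mu) {l : PartAbove mu} {h : ℕ → ℕ}
    (hl : colHeight l.1 = update h c b) : max (h (c + 1)) (colHeight mu c) ≤ b := by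
  have hnext := l.2.1.colHeight.1 c
  have hmu_c := colHeight_le hmu l c
  rw [hl, update_self] at hmu_c
  rw [hl, update_self, update_of_ne c.succ_ne_self] at hnext
  exact max_le hnext hmu_c

end PartAbove

section StripOp

variable {R : Type*}

/-- The weighted sum by which `ũ_c` acts on a function `g` of the height of column `c`, when that
height cannot drop below `e`: the coefficient at `x` collects, for each `e ≤ b < x`, the addition of
`x - b` boxes to height `b`, which is reached either directly or by removing a box from height
`b + 1`. -/
def stripOp [CommSemiring R] (α β : R) (e : ℕ) : (ℕ → R) →ₗ[R] ℕ → R where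
  toFun g x := ∑ b ∈ Ico e x, α ^ (x - b - 1) * (g b + β * g (b + 1))
  map_add' g g' := by
    funext x
    rw [Pi.add_apply, ← sum_add_distrib]
    exact sum_congr rfl fun b _ => by simp only [Pi.add_apply]; ring
  map_smul' r g := by
    funext x
    simp only [Pi.smul_apply, smul_eq_mul, mul_sum, RingHom.id_apply]
    exact sum_congr rfl fun b _ => by ring

section CommSemiring

variable [CommSemiring R] (α β : R) {e x : ℕ}

theorem stripOp_apply (e : ℕ) (g : ℕ → R) (x : ℕ) :
    stripOp α β e g x = ∑ b ∈ Ico e x, α ^ (x - b - 1) * (g b + β * g (b + 1)) :=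
  rfl

theorem stripOp_of_le (h : x ≤ e) (g : ℕ → R) : stripOp α β e g x = 0 := by
  rw [stripOp_apply, Ico_eq_empty_of_le h, sum_empty]

theorem stripOp_succ (h : e ≤ x) (g : ℕ → R) :
    stripOp α β e g (x + 1) = α * stripOp α β e g x + g x + β * g (x + 1) := by
  have hpow : ∀ b ∈ Ico e x, α ^ (x + 1 - b - 1) * (g b + β * g (b + 1)) =
      α * (α ^ (x - b - 1) * (g b + β * g (b + 1))) := fun b hb => by
    rw [show x + 1 - b - 1 = x - b - 1 + 1 by have := mem_Ico.1 hb; omega, pow_succ']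
    ring
  rw [stripOp_apply, sum_Ico_succ_top h, sum_congr rfl hpow, ← mul_sum, ← stripOp_apply,
    show x + 1 - x - 1 = 0 by omega]
  ring

theorem stripOp_congr {g g' : ℕ → R} (h : ∀ b, e ≤ b → b ≤ x → g b = g' b) :
    stripOp α β e g x = stripOp α β e g' x := by
  rw [stripOp_apply, stripOp_apply]
  refine sum_congr rfl fun b hb => ?_
  obtain ⟨hlow, hup⟩ := mem_Ico.1 hb
  rw [h b hlow hup.le, h (b + 1) (by omega) hup]

theorem stripOp_comm (e e' : ℕ) (G : ℕ → ℕ → R) (x y : ℕ) :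
    stripOp α β e (fun a => stripOp α β e' (fun b => G a b) y) x =
      stripOp α β e' (fun b => stripOp α β e (fun a => G a b) x) y := by
  simp only [stripOp_apply, mul_sum, ← sum_add_distrib]
  rw [sum_comm]
  exact sum_congr rfl fun b _ => sum_congr rfl fun a _ => by ring

/-- The action of `ũ_c` on functions of the heights of two adjacent columns, for the left column
`c`: its height `x` is bounded below by the height `y` of its right neighbour and by the height
`m` of column `c` of `μ`. -/
def leftOp (m : ℕ) (G : ℕ → ℕ → R) (x y : ℕ) : R :=
  stripOp α β (max y m) (fun a => G a y) x

/-- The action of `ũ_c` on functions of the heights of two adjacent columns, for the right column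
`c`, whose height `y` is bounded below by `e`. -/
def rightOp (e : ℕ) (G : ℕ → ℕ → R) (x y : ℕ) : R :=
  stripOp α β e (G x) y

variable {m y : ℕ} (G : ℕ → ℕ → R)

theorem leftOp_of_le (h : x ≤ max y m) : leftOp α β m G x y = 0 :=
  stripOp_of_le α β h _

theorem leftOp_succ (hy : y ≤ x) (hm : m ≤ x) :
    leftOp α β m G (x + 1) y = α * leftOp α β m G x y + G x y + β * G (x + 1) y :=
  stripOp_succ α β (max_le hy hm) _

theorem rightOp_of_le (h : y ≤ e) : rightOp α β e G x y = 0 :=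
  stripOp_of_le α β h _

theorem rightOp_succ (h : e ≤ y) :
    rightOp α β e G x (y + 1) = α * rightOp α β e G x y + G x y + β * G x (y + 1) :=
  stripOp_succ α β h _

theorem rightOp_leftOp_succ (hy : y ≤ x) (hm : m ≤ x) :
    rightOp α β e (leftOp α β m G) (x + 1) y =
      α * rightOp α β e (leftOp α β m G) x y + rightOp α β e G x y +
        β * rightOp α β e G (x + 1) y := by
  have hrow : stripOp α β e (leftOp α β m G (x + 1)) y =
      stripOp α β e (α • leftOp α β m G x + G x + β • G (x + 1)) y :=
    stripOp_congr α β fun b _ hb => leftOp_succ α β G (hb.trans hy) hm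
  simp only [rightOp, hrow, map_add, map_smul, Pi.add_apply, Pi.smul_apply, smul_eq_mul]

theorem rightOp_leftOp_of_le (hx : x ≤ m) : rightOp α β e (leftOp α β m G) x y = 0 := by
  have hzero : leftOp α β m G x = 0 :=
    funext fun b => leftOp_of_le α β G (hx.trans (le_max_right b m))
  simp [rightOp, hzero]

theorem rightOp_leftOp_leftOp_diag_succ (he : e ≤ y) :
    rightOp α β e (leftOp α β m (leftOp α β m G)) (y + 1) (y + 1) =
      α ^ 2 * rightOp α β e (leftOp α β m (leftOp α β m G)) y y +
        α * rightOp α β e (leftOp α β m G) y y +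
          β * rightOp α β e (leftOp α β m G) (y + 1) (y + 1) := by
  rcases lt_or_ge y m with hym | hmy
  · simp only [rightOp_leftOp_of_le α β _ hym, rightOp_leftOp_of_le α β _ hym.le]
    ring
  · have hvanish (H : ℕ → ℕ → R) (z : ℕ) : leftOp α β m H z z = 0 :=
      leftOp_of_le α β H (le_max_left z m)
    simp only [rightOp_succ α β _ he, rightOp_leftOp_succ α β _ le_rfl hmy,
      leftOp_succ α β _ le_rfl hmy, hvanish]
    ring

end CommSemiring

variable [CommRing R] (α β : R) {m e x y : ℕ} (G : ℕ → ℕ → R)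

theorem leftOp_rightOp_sub_rightOp_leftOp (hy : y ≤ x) (hm : m ≤ x) :
    leftOp α β m (rightOp α β e G) x y - rightOp α β e (leftOp α β m G) x y =
      -(α ^ (x - y) * rightOp α β e (leftOp α β m G) y y) := by
  induction x, max_le hy hm using Nat.le_induction with
  | base =>
    rw [leftOp_of_le α β _ le_rfl]
    rcases le_total m y with hmy | hym
    · simp [max_eq_left hmy]
    · simp [max_eq_right hym, rightOp_leftOp_of_le α β G hym,
        rightOp_leftOp_of_le α β G le_rfl]
  | succ x hx ih =>
    obtain ⟨hy, hm⟩ := max_le_iff.1 hx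
    rw [leftOp_succ α β _ hy hm, rightOp_leftOp_succ α β _ hy hm, Nat.succ_sub hy, pow_succ]
    linear_combination α * ih hy hm

theorem rightOp_leftOp_rightOp_sub (hy : y ≤ x) (hm : m ≤ x) :
    rightOp α β e (leftOp α β m (rightOp α β e G)) x y -
        rightOp α β e (rightOp α β e (leftOp α β m G)) x y =
      -(α ^ (x - y) * rightOp α β e (leftOp α β m (leftOp α β m G)) y y) := by
  induction y with
  | zero => simp only [rightOp_of_le α β _ (Nat.zero_le e), mul_zero, neg_zero, sub_zero]
  | succ y ih =>
    rcases le_or_gt (y + 1) e with hye | hey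
    · simp only [rightOp_of_le α β _ hye, mul_zero, neg_zero, sub_zero]
    have he : e ≤ y := Nat.lt_succ_iff.1 hey
    have hcomm := leftOp_rightOp_sub_rightOp_leftOp α β (e := e) G (Nat.le_of_succ_le hy) hm
    have hcomm_succ := leftOp_rightOp_sub_rightOp_leftOp α β (e := e) G hy hm
    have ih := ih (Nat.le_of_succ_le hy)
    rw [show x - y = x - (y + 1) + 1 by omega, pow_succ] at ih hcomm
    rw [rightOp_succ α β (leftOp α β m _) he, rightOp_succ α β (rightOp α β e _) he,
      rightOp_leftOp_leftOp_diag_succ α β G he]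
    linear_combination α * ih + hcomm + β * hcomm_succ

theorem rightOp_commutator_eq_commutator_leftOp (hy : y ≤ x) (hm : m ≤ x) :
    rightOp α β e (leftOp α β m (rightOp α β e G)) x y -
        rightOp α β e (rightOp α β e (leftOp α β m G)) x y =
      leftOp α β m (rightOp α β e (leftOp α β m G)) x y -
        rightOp α β e (leftOp α β m (leftOp α β m G)) x y := by
  rw [rightOp_leftOp_rightOp_sub α β G hy hm, leftOp_rightOp_sub_rightOp_leftOp α β _ hy hm]

end StripOp

section ColumnOp

variable {R : Type*}

/-- The operator `ũ_c` written on functions of the sequence of column heights; `m` is the sequence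
of column heights of `μ`. -/
def columnOp [CommSemiring R] (α β : R) (m : ℕ → ℕ) (c : ℕ) (F : (ℕ → ℕ) → R) (h : ℕ → ℕ) : R :=
  stripOp α β (max (h (c + 1)) (m c)) (fun b => F (update h c b)) (h c)

/-- The restriction of a function of column heights to the plane in which only the heights of
columns `i` and `i + 1` vary. -/
def adjacentSlice (h : ℕ → ℕ) (i : ℕ) (F : (ℕ → ℕ) → R) (x y : ℕ) : R :=
  F (update (update h i x) (i + 1) y)

theorem adjacentSlice_self (h : ℕ → ℕ) (i : ℕ) (F : (ℕ → ℕ) → R) :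
    adjacentSlice h i F (h i) (h (i + 1)) = F h := by
  simp only [adjacentSlice, update_eq_self]

section CommSemiring

variable [CommSemiring R] (α β : R) (m h : ℕ → ℕ) (i : ℕ) (F : (ℕ → ℕ) → R)

theorem columnOp_comm {i k : ℕ} (hik : i + 1 < k) :
    columnOp α β m i (columnOp α β m k F) = columnOp α β m k (columnOp α β m i F) := by
  have hki : k ≠ i := by omega
  have hki' : k + 1 ≠ i := by omega
  funext h
  simp only [columnOp, update_of_ne hki, update_of_ne hki', update_of_ne hki.symm,
    update_of_ne hik.ne]
  rw [stripOp_comm]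
  simp only [update_comm hki]

theorem adjacentSlice_columnOp : adjacentSlice h i (columnOp α β m i F) =
    leftOp α β (m i) (adjacentSlice h i F) := by
  funext x y
  have hne : i ≠ i + 1 := i.succ_ne_self.symm
  simp only [adjacentSlice, columnOp, leftOp, update_self, update_of_ne hne,
    update_comm hne.symm, update_idem]

theorem adjacentSlice_columnOp_succ : adjacentSlice h i (columnOp α β m (i + 1) F) =
    rightOp α β (max (h (i + 2)) (m (i + 1))) (adjacentSlice h i F) := by
  funext x y
  have hne : i + 1 + 1 ≠ i := by omega
  simp only [adjacentSlice, columnOp, rightOp, update_self, update_of_ne hne,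
    update_of_ne (i + 1).succ_ne_self, update_idem]
  rfl

end CommSemiring

theorem columnOp_adjacent_relation [CommRing R] (α β : R) (m : ℕ → ℕ) (F : (ℕ → ℕ) → R)
    {h : ℕ → ℕ} {i : ℕ} (hh : h (i + 1) ≤ h i) (hm : m i ≤ h i) :
    columnOp α β m (i + 1) (columnOp α β m i (columnOp α β m (i + 1) F)) h -
        columnOp α β m (i + 1) (columnOp α β m (i + 1) (columnOp α β m i F)) h =
      columnOp α β m i (columnOp α β m (i + 1) (columnOp α β m i F)) h -
        columnOp α β m (i + 1) (columnOp α β m i (columnOp α β m i F)) h := by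
  have hslice := rightOp_commutator_eq_commutator_leftOp α β
    (e := max (h (i + 2)) (m (i + 1))) (adjacentSlice h i F) hh hm
  simpa only [← adjacentSlice_columnOp, ← adjacentSlice_columnOp_succ, adjacentSlice_self]
    using hslice

end ColumnOp

section Transfer

open MvPolynomial

variable {mu : ℕ → ℕ}

/-- The formal sum of partitions whose coefficients are prescribed as a function of column
heights. -/
noncomputable def ofColHeights (mu : ℕ → ℕ) (F : (ℕ → ℕ) → RAB) : ModAbove mu :=
  fun l => F (colHeight l.1)

theorem ofColHeights_surjective (mu : ℕ → ℕ) : Surjective (ofColHeights mu) :=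
  PartAbove.colHeight_injective.surjective_comp_right

theorem dOp_apply_of_addCol {c : ℕ} {nu l : PartAbove mu} (h : AddCol c 1 nu.1 l.1)
    (f : ModAbove mu) : dOp c f nu = X 1 * f l := by
  rw [dOp, finsum_eq_single _ l fun l' hl' => if_neg fun h' => hl' ?_, if_pos h]
  exact Subtype.ext (h'.2.2.trans h.2.2.symm)

theorem finsum_addCol_ofColHeights (hmu : IsPartitionFun mu) (c a : ℕ) (F : (ℕ → ℕ) → RAB)
    (nu : PartAbove mu) :
    (∑ᶠ l : PartAbove mu,
      if AddCol c a l.1 nu.1 then (X 0 : RAB) ^ (a - 1) * ofColHeights mu F l else 0) =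
    if a ∈ Icc 1 (colHeight nu.1 c - max (colHeight nu.1 (c + 1)) (colHeight mu c)) then
      X 0 ^ (a - 1) * F (update (colHeight nu.1) c (colHeight nu.1 c - a)) else 0 := by
  split_ifs with ha <;> rw [mem_Icc] at ha
  · obtain ⟨l, hl⟩ := PartAbove.exists_colHeight_eq_update hmu nu (c := c)
      (b := colHeight nu.1 c - a) (by omega) (Nat.sub_le _ _)
    have hadd : AddCol c a l.1 nu.1 :=
      (addCol_iff_colHeight_eq_update_sub l.2.1 nu.2.1).2 ⟨ha.1, by omega, hl⟩
    rw [finsum_eq_single _ l fun l' hl' => if_neg fun hadd' => hl' ?_, if_pos hadd, ofColHeights,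
      hl]
    have hl'' := ((addCol_iff_colHeight_eq_update_sub l'.2.1 nu.2.1).1 hadd').2.2
    exact PartAbove.colHeight_injective (hl''.trans hl.symm)
  · refine finsum_eq_zero_of_forall_eq_zero fun l => if_neg fun hadd => ha ?_
    obtain ⟨hpos, hle, hl⟩ := (addCol_iff_colHeight_eq_update_sub l.2.1 nu.2.1).1 hadd
    have := PartAbove.max_le_of_colHeight_eq_update hmu hl
    omega

theorem uOp_ofColHeights_apply (hmu : IsPartitionFun mu) (c : ℕ) (F : (ℕ → ℕ) → RAB)
    (nu : PartAbove mu) :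
    uOp c (ofColHeights mu F) nu =
      ∑ b ∈ Ico (max (colHeight nu.1 (c + 1)) (colHeight mu c)) (colHeight nu.1 c),
        X 0 ^ (colHeight nu.1 c - b - 1) * F (update (colHeight nu.1) c b) := by
  simp only [uOp, finsum_addCol_ofColHeights hmu]
  simp only [← finsum_eq_if, finsum_mem_finset_eq_sum]
  refine sum_nbij' (colHeight nu.1 c - ·) (colHeight nu.1 c - ·) ?_ ?_ ?_ ?_ ?_ <;>
    simp only [mem_Icc, mem_Ico] <;> intro a ha
  iterate 4 omega
  rw [Nat.sub_sub_self (by omega)]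

theorem tuOp_ofColHeights (hmu : IsPartitionFun mu) (c : ℕ) (F : (ℕ → ℕ) → RAB) :
    tuOp c (ofColHeights mu F) =
      ofColHeights mu (columnOp (X 0) (X 1) (colHeight mu) c F) := by
  obtain ⟨G, hG⟩ := ofColHeights_surjective mu
    fun nu => ofColHeights mu F nu + dOp c (ofColHeights mu F) nu
  funext nu
  rw [tuOp, ← hG, uOp_ofColHeights_apply hmu]
  refine sum_congr rfl fun b hb => congrArg _ ?_
  obtain ⟨hlow, hup⟩ := mem_Ico.1 hb
  obtain ⟨l, hl⟩ := PartAbove.exists_colHeight_eq_update hmu nu hlow hup.le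
  obtain ⟨l', hl'⟩ :=
    PartAbove.exists_colHeight_eq_update hmu nu (hlow.trans b.le_succ) hup
  have hadd : AddCol c 1 l.1 l'.1 :=
    addCol_of_colHeight_eq_update l.2.1 l'.2.1 le_rfl (by simp [hl, hl'])
  have hGl : G (update (colHeight nu.1) c b) =
      ofColHeights mu F l + dOp c (ofColHeights mu F) l := by
    rw [← hl]
    exact congrFun hG l
  rw [hGl, dOp_apply_of_addCol hadd, ofColHeights, ofColHeights, hl, hl']

theorem tuOp_comm (hmu : IsPartitionFun mu) {i k : ℕ} (hik : i + 1 < k) (x : ModAbove mu) :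
    tuOp i (tuOp k x) = tuOp k (tuOp i x) := by
  obtain ⟨F, rfl⟩ := ofColHeights_surjective mu x
  simp only [tuOp_ofColHeights hmu]
  rw [columnOp_comm _ _ _ _ hik]

theorem tuOp_adjacent_relation (hmu : IsPartitionFun mu) (i : ℕ) (x : ModAbove mu)
    (nu : PartAbove mu) :
    tuOp (i + 1) (tuOp i (tuOp (i + 1) x)) nu - tuOp (i + 1) (tuOp (i + 1) (tuOp i x)) nu =
      tuOp i (tuOp (i + 1) (tuOp i x)) nu - tuOp (i + 1) (tuOp i (tuOp i x)) nu := by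
  obtain ⟨F, rfl⟩ := ofColHeights_surjective mu x
  simp only [tuOp_ofColHeights hmu]
  exact columnOp_adjacent_relation _ _ _ F (nu.2.1.colHeight.1 i)
    (PartAbove.colHeight_le hmu nu i)

end Transfer

/-- For every fixed partition `mu`, the operators `ũ_i` satisfy the
Fomin–Greene relations: (i) `ũ_i ũ_k ũ_j = ũ_k ũ_i ũ_j` for `i < j < k`;
(ii) `ũ_j ũ_k ũ_i = ũ_j ũ_i ũ_k` for `i < j < k`;
(iii) `ũ_j(ũ_i ũ_j − ũ_j ũ_i) = (ũ_i ũ_j − ũ_j ũ_i) ũ_i` for `i < j`, i.e.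
`ũ_j ũ_i ũ_j − ũ_j ũ_j ũ_i = ũ_i ũ_j ũ_i − ũ_j ũ_i ũ_i`. -/
theorem tuOp_fomin_greene_relations (mu : ℕ → ℕ) (hmu : IsPartitionFun mu) :
    (∀ i j k : ℕ, i < j → j < k → ∀ x : ModAbove mu,
      tuOp i (tuOp k (tuOp j x)) = tuOp k (tuOp i (tuOp j x))) ∧
    (∀ i j k : ℕ, i < j → j < k → ∀ x : ModAbove mu,
      tuOp j (tuOp k (tuOp i x)) = tuOp j (tuOp i (tuOp k x))) ∧
    (∀ i j : ℕ, i < j → ∀ x : ModAbove mu,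
      (fun nu => tuOp j (tuOp i (tuOp j x)) nu - tuOp j (tuOp j (tuOp i x)) nu) =
      (fun nu => tuOp i (tuOp j (tuOp i x)) nu - tuOp j (tuOp i (tuOp i x)) nu)) := by
  refine ⟨fun i j k hij hjk x => tuOp_comm hmu (by omega) _,
    fun i j k hij hjk x => congrArg (tuOp j) (tuOp_comm hmu (by omega) x).symm,
    fun i j hij x => funext fun nu => ?_⟩
  obtain rfl | hfar : j = i + 1 ∨ i + 1 < j := by omega
  · exact tuOp_adjacent_relation hmu i x nu
  · rw [tuOp_comm hmu hfar x, tuOp_comm hmu hfar (tuOp i x), sub_self, sub_self]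
end
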